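/- There exist compact subsets C₀ ⊆ G₀ and C_H ⊆ H such that G₀ = C_H · A_H^+ · A₀^+ · C₀, i.e. every g ∈ G₀ can be written g = k_H a_H a₀ k₀ with k_H ∈ C_H, a_H ∈ A_H^+, a₀ ∈ A₀^+ and k₀ ∈ C₀ (a relative Cartan decomposition of the unitary group G₀ with respect to the subgroup H). -/

import Mathlib

/-! Common setup for the p-adic statements.  `E` is a nonarchimedean local field of
characteristic zero (a complete, nontrivially normed field with ultrametric norm,
compact unit ball, and discrete valuation `valE` normalized at a uniformizer `πE`),
`σ` is an involution of `E`, and `(V₀, h)` is a hermitian space over `E` relative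
to `σ`.  The unitary group `G₀` is realized inside the continuous linear
endomorphisms of `V₀`. -/

section PadSetup

variable (E : Type*) [NontriviallyNormedField E]
variable (V₀ : Type*) [NormedAddCommGroup V₀] [NormedSpace E V₀]

/-- The unitary group `G₀ = U(V₀, h)`. -/
def PadG (h : V₀ → V₀ → E) : Set (V₀ →L[E] V₀) :=
  {g | Function.Bijective (⇑g) ∧ ∀ u v : V₀, h (g u) (g v) = h u v}

/-- The subgroup `H` of `G₀` fixing `w₀` (the unitary group of `W = (Ew₀)^⊥`). -/
def PadH (h : V₀ → V₀ → E) (w₀ : V₀) : Set (V₀ →L[E] V₀) :=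
  {g | g ∈ PadG E V₀ h ∧ g w₀ = w₀}

/-- The anisotropic kernel `V_{an,0}`: the orthogonal complement of the hyperbolic
space `⊕ᵢ (Euᵢ ⊕ Eu₋ᵢ)`, where `u±ᵢ = w_{2i−2} ± w_{2i−1}` for `1 ≤ i ≤ r₀ = ⌊(l+1)/2⌋`. -/
def PadVan (h : V₀ → V₀ → E) (l : ℕ) (w : ℕ → V₀) : Set V₀ :=
  {v | ∀ i : ℕ, 1 ≤ i → i ≤ (l + 1) / 2 →
    h v (w (2 * i - 2) + w (2 * i - 1)) = 0 ∧ h v (w (2 * i - 2) - w (2 * i - 1)) = 0}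

/-- `R_{an,0} = {v ∈ V_{an,0} : val_E h(v,v) ≥ val_E ν₀ − 1}`. -/
def PadRan (h : V₀ → V₀ → E) (l : ℕ) (w : ℕ → V₀) (valE : E → ℤ) (ν₀ : E) : Set V₀ :=
  {v | v ∈ PadVan E V₀ h l w ∧ (v = 0 ∨ valE ν₀ - 1 ≤ valE (h v v))}

/-- The lattice `R₀ = O_E u₁ + O_E u₋₁ + … + O_E u_{r₀} + O_E u₋_{r₀} + R_{an,0}`. -/
def PadR0 (h : V₀ → V₀ → E) (l : ℕ) (w : ℕ → V₀) (valE : E → ℤ) (ν₀ : E) : Set V₀ :=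
  {v | ∃ (a b : ℕ → E) (x : V₀), x ∈ PadRan E V₀ h l w valE ν₀ ∧
    (∀ i, ‖a i‖ ≤ 1) ∧ (∀ i, ‖b i‖ ≤ 1) ∧
    v = (∑ i ∈ Finset.Icc 1 ((l + 1) / 2), a i • (w (2 * i - 2) + w (2 * i - 1))) +
      (∑ i ∈ Finset.Icc 1 ((l + 1) / 2), b i • (w (2 * i - 2) - w (2 * i - 1))) + x}

end PadSetup

section PadSetup3

variable (E : Type*) [NontriviallyNormedField E]
variable (V₀ : Type*) [NormedAddCommGroup V₀] [NormedSpace E V₀]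

/-- The anisotropic kernel `W_an` of `W = (Ew₀)^⊥`: the orthogonal complement in `W` of
`⊕ᵢ (Eu'ᵢ ⊕ Eu'₋ᵢ)`, where `u'±ᵢ = w_{2i−1} ± w_{2i}` for `1 ≤ i ≤ r₁ = ⌊l/2⌋`. -/
def PadWan (h : V₀ → V₀ → E) (l : ℕ) (w : ℕ → V₀) : Set V₀ :=
  {v | h v (w 0) = 0 ∧ ∀ i : ℕ, 1 ≤ i → i ≤ l / 2 →
    h v (w (2 * i - 1) + w (2 * i)) = 0 ∧ h v (w (2 * i - 1) - w (2 * i)) = 0}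

/-- The positive chamber `A₀⁺` of the maximal split torus `A₀` of `G₀`: elements acting by
`aᵢ` on `uᵢ`, by `σ(aᵢ)⁻¹` on `u₋ᵢ`, trivially on `V_{an,0}`, with
`val_E a₁ ≥ … ≥ val_E a_{r₀} ≥ 0`. -/
def PadA0 (h : V₀ → V₀ → E) (σ : E → E) (valE : E → ℤ) (l : ℕ) (w : ℕ → V₀) :
    Set (V₀ →L[E] V₀) :=
  {g | g ∈ PadG E V₀ h ∧ ∃ a : ℕ → E,
    (∀ i : ℕ, 1 ≤ i → i ≤ (l + 1) / 2 → a i ≠ 0 ∧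
      g (w (2 * i - 2) + w (2 * i - 1)) = a i • (w (2 * i - 2) + w (2 * i - 1)) ∧
      g (w (2 * i - 2) - w (2 * i - 1)) = (σ (a i))⁻¹ • (w (2 * i - 2) - w (2 * i - 1))) ∧
    (∀ v ∈ PadVan E V₀ h l w, g v = v) ∧
    (∀ i : ℕ, 1 ≤ i → i + 1 ≤ (l + 1) / 2 → valE (a (i + 1)) ≤ valE (a i)) ∧
    (1 ≤ (l + 1) / 2 → 0 ≤ valE (a ((l + 1) / 2)))}

/-- The positive chamber `A_H⁺` of the maximal split torus `A_H` of `H`: elements of `H`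
acting by `a'ᵢ` on `u'ᵢ`, by `σ(a'ᵢ)⁻¹` on `u'₋ᵢ`, trivially on `Ew₀ ⊕ W_an`, with
`val_E a'₁ ≥ … ≥ val_E a'_{r₁} ≥ 0`. -/
def PadAH (h : V₀ → V₀ → E) (σ : E → E) (valE : E → ℤ) (l : ℕ) (w : ℕ → V₀) :
    Set (V₀ →L[E] V₀) :=
  {g | g ∈ PadH E V₀ h (w 0) ∧ ∃ a : ℕ → E,
    (∀ i : ℕ, 1 ≤ i → i ≤ l / 2 → a i ≠ 0 ∧
      g (w (2 * i - 1) + w (2 * i)) = a i • (w (2 * i - 1) + w (2 * i)) ∧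
      g (w (2 * i - 1) - w (2 * i)) = (σ (a i))⁻¹ • (w (2 * i - 1) - w (2 * i))) ∧
    (∀ v ∈ PadWan E V₀ h l w, g v = v) ∧
    (∀ i : ℕ, 1 ≤ i → i + 1 ≤ l / 2 → valE (a (i + 1)) ≤ valE (a i)) ∧
    (1 ≤ l / 2 → 0 ≤ valE (a (l / 2)))}

end PadSetup3

/-!
Compact sets of isometries may be replaced by bounded ones, and the statement is proved for the
stabilizer of `w 0, …, w (j - 1)`, relative to the stabilizer of `w j` in it, by downward induction
on `j`. A bounded isometry `k` moves `g⁻¹ (w j)` to `a⁻¹ (w j)`, for some element `a` of parameter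
`α` in the rank one torus of the plane spanned by `w j` and `w (j + 1)`, so `g = b * a * k` with
`b` fixing `w j`. The inverse of the decomposition of `b⁻¹` supplied by the induction hypothesis
writes `b` as bounded * chamber of `w (j + 1), …` * chamber of `w (j + 2), …` * bounded; inversion
reverses the chambers, so the hypothesis is applied to the frame with alternating signs.
The last bounded factor commutes with `a`, so it remains to see that `α` is at most of the order of
the first parameter `β 0` of the second chamber element. This is arranged by choosing `b` nearly
maximal on `w (j + 1)` in its coset modulo the elements that conjugation by `a` makes bounded: this
group contains the small Eichler transformations, which would increase `b (w (j + 1))` if `α` were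
too large compared with `β 0`. When `j = l`, the stabilizer is the isometry group of an
anisotropic space, which is bounded.
-/

section RelativeCartan

open ContinuousLinearMap Metric

variable {E V : Type*} [NontriviallyNormedField E] [NormedAddCommGroup V] [NormedSpace E V]
  {σ : E →+* E} {B : V →SL[σ] V →L[E] E} {s : Set V}

section Isometries

theorem inv_apply_self (g : V ≃L[E] V) (v : V) : g⁻¹ (g v) = v :=
  g.symm_apply_apply v

theorem apply_inv_self (g : V ≃L[E] V) (v : V) : g (g⁻¹ v) = v :=
  g.apply_symm_apply v

/-- `B` is a nondegenerate hermitian form relative to `σ`, conjugate-linear in its first argument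
(a symmetric bilinear form when `σ` is the identity). -/
structure IsHermitianForm (B : V →SL[σ] V →L[E] E) : Prop where
  symm : ∀ x y, σ (B x y) = B y x
  nondegenerate : ∀ x, (∀ y, B x y = 0) → x = 0

/-- The isometries of the form `B` that fix the set `s` pointwise. -/
def isometriesFixing (B : V →SL[σ] V →L[E] E) (s : Set V) : Subgroup (V ≃L[E] V) where
  carrier := {g | (∀ x y, B (g x) (g y) = B x y) ∧ ∀ x ∈ s, g x = x}
  one_mem' := ⟨fun _ _ => rfl, fun _ _ => rfl⟩
  mul_mem' := fun {a b} ha hb => ⟨fun x y => (ha.1 _ _).trans (hb.1 x y),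
    fun x hx => (congrArg a (hb.2 x hx)).trans (ha.2 x hx)⟩
  inv_mem' := fun {a} ha => ⟨fun x y => by
      simpa only [apply_inv_self] using (ha.1 (a⁻¹ x) (a⁻¹ y)).symm,
    fun x hx => a.symm_apply_eq.2 (ha.2 x hx).symm⟩

/-- The orthogonal complement of a set of vectors with respect to `B`. -/
def orthogonalTo (B : V →SL[σ] V →L[E] E) (s : Set V) : Submodule E V where
  carrier := {v | ∀ x ∈ s, B x v = 0}
  add_mem' := fun hv hv' x hx => by rw [map_add, hv x hx, hv' x hx, add_zero]
  zero_mem' := fun x _ => map_zero (B x)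
  smul_mem' := fun c v hv x hx => by rw [map_smul, hv x hx, smul_zero]

theorem isometriesFixing_mono {t : Set V} (hst : s ⊆ t) :
    isometriesFixing B t ≤ isometriesFixing B s :=
  fun _ hg => ⟨hg.1, fun x hx => hg.2 x (hst hx)⟩

theorem orthogonalTo_anti {t : Set V} (hst : s ⊆ t) : orthogonalTo B t ≤ orthogonalTo B s :=
  fun _ hv x hx => hv x (hst hx)

theorem map_inv_apply_left {g : V ≃L[E] V} (hg : g ∈ isometriesFixing B s) (x y : V) :
    B (g⁻¹ x) y = B x (g y) := by
  rw [← hg.1, apply_inv_self]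

theorem apply_mem_orthogonalTo {g : V ≃L[E] V} (hg : g ∈ isometriesFixing B s) {v : V}
    (hv : v ∈ orthogonalTo B s) : g v ∈ orthogonalTo B s := fun x hx => by
  rw [← hg.2 x hx, hg.1, hv x hx]

namespace IsHermitianForm

variable (hB : IsHermitianForm B)
include hB

theorem ortho_comm {x y : V} : B x y = 0 ↔ B y x = 0 := by
  rw [← hB.symm x y, map_eq_zero σ]

theorem ext_right {x y : V} (hxy : ∀ z, B z x = B z y) : x = y :=
  sub_eq_zero.1 <| hB.nondegenerate _ fun z =>
    hB.ortho_comm.1 (by rw [map_sub, hxy, sub_self])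

theorem exists_isometry_coe_eq [CompleteSpace E] [FiniteDimensional E V] (f : V →L[E] V)
    (hf : ∀ x y, B (f x) (f y) = B x y) (hfs : ∀ x ∈ s, f x = x) :
    ∃ g ∈ isometriesFixing B s, (g : V →L[E] V) = f := by
  have hinj : Function.Injective (f : V →ₗ[E] V) :=
    (injective_iff_map_eq_zero f).2 fun x hx => hB.nondegenerate x fun y => by
      rw [← hf, hx, map_zero, zero_apply]
  let g := (LinearEquiv.ofInjectiveEndo (f : V →ₗ[E] V) hinj).toContinuousLinearEquiv
  exact ⟨g, ⟨hf, hfs⟩, rfl⟩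

end IsHermitianForm

end Isometries

section Transvections

namespace IsHermitianForm

-- The quasi-reflection `x ↦ x - (c⁻¹ * B d x) • d` with `d = v - v'` and `c = B d v` is an isometry
-- because `c + σ c = B d d`, and it carries `v` to `v - d = v'`.
theorem exists_isometry_apply_eq [RingHomIsometric σ] [CompleteSpace E]
    [FiniteDimensional E V] (hB : IsHermitianForm B) {v v' : V}
    (hv : v ∈ orthogonalTo B s) (hv' : v' ∈ orthogonalTo B s) (hvv' : B v v = B v' v')
    (hc : B (v - v') v ≠ 0) :
    ∃ k ∈ isometriesFixing B s, k v = v' ∧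
      ‖(k : V →L[E] V)‖ ≤ 1 + ‖B‖ * ‖v - v'‖ ^ 2 / ‖B (v - v') v‖ := by
  set d := v - v' with hd
  set c := B d v with hcd
  have hds : d ∈ orthogonalTo B s := sub_mem hv hv'
  have hσc : σ c = B v d := hB.symm d v
  have htrace : c + σ c = B d d := by
    rw [hσc, hcd, hd]
    simp only [map_sub, sub_apply]
    linear_combination hvv'
  have hσc0 : σ c ≠ 0 := (map_ne_zero σ).2 hc
  obtain ⟨k, hk, hkf⟩ := hB.exists_isometry_coe_eq (s := s)
    (ContinuousLinearMap.id E V - c⁻¹ • (B d).smulRight d)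
    (fun x y => by
      simp only [sub_apply, id_apply, smul_apply, smulRight_apply, map_sub, map_smul, map_smulₛₗ,
        smul_eq_mul, map_inv₀, hB.symm d x, ← htrace]
      field_simp
      ring)
    (fun x hx => by
      simp only [sub_apply, id_apply, smul_apply, smulRight_apply,
        hB.ortho_comm.1 (hds x hx), zero_smul, smul_zero, sub_zero])
  refine ⟨k, hk, ?_, ?_⟩
  · calc k v = v - c⁻¹ • c • d := DFunLike.congr_fun hkf v
      _ = v' := by rw [inv_smul_smul₀ hc, hd, sub_sub_cancel]
  · calc ‖(k : V →L[E] V)‖ ≤ ‖ContinuousLinearMap.id E V‖ + ‖c⁻¹ • (B d).smulRight d‖ :=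
          hkf ▸ norm_sub_le _ _
      _ ≤ 1 + ‖c‖⁻¹ * (‖B‖ * ‖d‖ * ‖d‖) := by
          rw [norm_smul, norm_inv, norm_smulRight_apply]
          gcongr
          · exact norm_id_le
          · exact B.le_opNorm d
      _ = 1 + ‖B‖ * ‖d‖ ^ 2 / ‖c‖ := by ring

end IsHermitianForm

/-- The Eichler transformation `E(u, y)` of `B`, an isometry carrying `u` to `u + y` when `u` is
anisotropic and `y` is isotropic and orthogonal to `u`. -/
noncomputable def eichler (B : V →SL[σ] V →L[E] E) (u y : V) : V →L[E] V :=
  ContinuousLinearMap.id E V +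
    (B u u)⁻¹ • ((B u).smulRight y - (B y).smulRight (u + (2 : E)⁻¹ • y))

theorem eichler_apply (u y x : V) :
    eichler B u y x = x + (B u u)⁻¹ • (B u x • y - B y x • (u + (2 : E)⁻¹ • y)) :=
  rfl

theorem norm_eichler_sub_id_le [RingHomIsometric σ] (u y : V) :
    ‖eichler B u y - ContinuousLinearMap.id E V‖ ≤
      ‖(B u u)⁻¹‖ * (‖B‖ * ‖y‖ * (2 * ‖u‖ + ‖(2 : E)⁻¹‖ * ‖y‖)) := by
  rw [eichler, add_sub_cancel_left, norm_smul]
  gcongr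
  calc ‖(B u).smulRight y - (B y).smulRight (u + (2 : E)⁻¹ • y)‖
      ≤ ‖B u‖ * ‖y‖ + ‖B y‖ * ‖u + (2 : E)⁻¹ • y‖ :=
        (norm_sub_le _ _).trans_eq (by simp only [norm_smulRight_apply])
    _ ≤ ‖B‖ * ‖u‖ * ‖y‖ + ‖B‖ * ‖y‖ * (‖u‖ + ‖(2 : E)⁻¹‖ * ‖y‖) := by
        gcongr
        · exact B.le_opNorm u
        · exact B.le_opNorm y
        · exact (norm_add_le _ _).trans_eq (by rw [norm_smul])
    _ = ‖B‖ * ‖y‖ * (2 * ‖u‖ + ‖(2 : E)⁻¹‖ * ‖y‖) := by ring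

theorem inv_mul_mul_eq_eichler {g p : V ≃L[E] V} (hg : g ∈ isometriesFixing B s) {u y : V}
    (hp : (p : V →L[E] V) = eichler B u y) :
    ((g⁻¹ * p * g : V ≃L[E] V) : V →L[E] V) = eichler B (g⁻¹ u) (g⁻¹ y) := by
  ext x
  calc g⁻¹ (p (g x)) = g⁻¹ (eichler B u y (g x)) := by rw [← hp]; rfl
    _ = eichler B (g⁻¹ u) (g⁻¹ y) x := by
        simp only [eichler_apply, map_add, map_sub, map_smul, inv_apply_self,
          map_inv_apply_left hg, apply_inv_self]

theorem eichler_apply_self {u y : V} (hu : B u u ≠ 0) (huy : B y u = 0) :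
    eichler B u y u = u + y := by
  rw [eichler_apply, huy, zero_smul, sub_zero, inv_smul_smul₀ hu]

theorem IsHermitianForm.exists_isometry_coe_eq_eichler [NeZero (2 : E)] [CompleteSpace E]
    [FiniteDimensional E V] (hB : IsHermitianForm B) {u y : V} (hu : B u u ≠ 0) (hy : B y y = 0)
    (huy : B u y = 0)
    (hus : u ∈ orthogonalTo B s) (hys : y ∈ orthogonalTo B s) :
    ∃ p ∈ isometriesFixing B s, (p : V →L[E] V) = eichler B u y := by
  have hyu : B y u = 0 := hB.ortho_comm.1 huy
  refine hB.exists_isometry_coe_eq _ (fun x z => ?_) fun x hx => ?_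
  · simp only [eichler_apply, map_add, map_sub, map_smul, map_smulₛₗ, add_apply, sub_apply,
      smul_apply, smul_eq_mul, map_inv₀, hB.symm, map_ofNat, hy, huy, hyu]
    field_simp
    ring
  · rw [eichler_apply, hB.ortho_comm.1 (hus x hx), hB.ortho_comm.1 (hys x hx)]
    simp only [zero_smul, sub_zero, smul_zero, add_zero]

end Transvections

section HyperbolicPairs

variable {e f : V}

/-- A pair of isotropic vectors spanning a hyperbolic plane; `B e f` need not be `1`. -/
structure IsHyperbolicPair (B : V →SL[σ] V →L[E] E) (e f : V) : Prop where
  left : B e e = 0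
  right : B f f = 0
  ne : B e f ≠ 0

/-- The endomorphism acting by `a` on `e`, by `b` on `f`, and trivially on the orthogonal
complement of the hyperbolic pair `e`, `f`. -/
noncomputable def hyperbolicDiag (B : V →SL[σ] V →L[E] E) (e f : V) (a b : E) : V →L[E] V :=
  ContinuousLinearMap.id E V + ((a - 1) / B f e) • (B f).smulRight e +
    ((b - 1) / B e f) • (B e).smulRight f

theorem hyperbolicDiag_apply (a b : E) (x : V) :
    hyperbolicDiag B e f a b x =
      x + ((a - 1) / B f e) • B f x • e + ((b - 1) / B e f) • B e x • f :=
  rfl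

theorem IsHyperbolicPair.hyperbolicDiag_mul (hef : IsHyperbolicPair B e f) (hfe : B f e ≠ 0)
    (a a' b b' : E) :
    hyperbolicDiag B e f (a * a') (b * b') =
      hyperbolicDiag B e f a b * hyperbolicDiag B e f a' b' := by
  have hef' := hef.ne
  ext x
  simp only [mul_apply_eq_comp, hyperbolicDiag_apply, map_add, map_smul, hef.left, hef.right]
  match_scalars <;> field_simp <;> ring

theorem exists_norm_hyperbolicDiag_le (B : V →SL[σ] V →L[E] E) (e f : V) :
    ∃ C > 0, ∀ a b : E, ∀ r : ℝ, 1 ≤ r → ‖a‖ ≤ r → ‖b‖ ≤ r →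
      ‖hyperbolicDiag B e f a b‖ ≤ C * r := by
  set p := ‖(B f e)⁻¹‖ * ‖(B f).smulRight e‖
  set q := ‖(B e f)⁻¹‖ * ‖(B e).smulRight f‖
  have hsub : ∀ c : E, ∀ r : ℝ, 1 ≤ r → ‖c‖ ≤ r → ‖c - 1‖ ≤ 2 * r := fun c r hr hc =>
    (norm_sub_le c 1).trans (by rw [norm_one]; linarith)
  refine ⟨1 + 2 * p + 2 * q, by positivity, fun a b r hr ha hb => ?_⟩
  have ha' := hsub a r hr ha
  have hb' := hsub b r hr hb
  calc ‖hyperbolicDiag B e f a b‖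
      ≤ 1 + ‖((a - 1) / B f e) • (B f).smulRight e‖ + ‖((b - 1) / B e f) • (B e).smulRight f‖ :=
        (norm_add₃_le ..).trans (by gcongr; exact norm_id_le)
    _ = 1 + ‖a - 1‖ * p + ‖b - 1‖ * q := by
        simp only [norm_smul, div_eq_mul_inv, norm_mul]
        ring
    _ ≤ r + 2 * r * p + 2 * r * q := by gcongr
    _ = (1 + 2 * p + 2 * q) * r := by ring

namespace IsHermitianForm

theorem isHyperbolicPair_symm (hB : IsHermitianForm B) (hef : IsHyperbolicPair B e f) :
    IsHyperbolicPair B f e :=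
  ⟨hef.right, hef.left, fun h0 => hef.ne (hB.ortho_comm.1 h0)⟩

/-- The torus of a hyperbolic pair `e`, `f`: the isometry acting by `α` on `e` and by `(σ α)⁻¹` on
`f`, and trivially on their orthogonal complement. -/
noncomputable def scaling (hB : IsHermitianForm B) (hef : IsHyperbolicPair B e f) :
    Eˣ →* (V ≃L[E] V) :=
  (ContinuousLinearEquiv.unitsEquiv E V).toMonoidHom.comp <| MonoidHom.toHomUnits
    { toFun := fun α => hyperbolicDiag B e f α (σ α)⁻¹
      map_one' := by
        ext x
        simp [hyperbolicDiag_apply]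
      map_mul' := fun α β => by
        rw [← hef.hyperbolicDiag_mul (hB.isHyperbolicPair_symm hef).ne, Units.val_mul, map_mul,
          mul_inv] }

variable (hB : IsHermitianForm B) (hef : IsHyperbolicPair B e f) (α : Eˣ)

theorem scaling_apply (x : V) :
    hB.scaling hef α x =
      x + ((α - 1 : E) / B f e) • B f x • e + (((σ α)⁻¹ - 1) / B e f) • B e x • f :=
  rfl

theorem scaling_apply_left : hB.scaling hef α e = (α : E) • e := by
  have hfe := (hB.isHyperbolicPair_symm hef).ne
  rw [scaling_apply, hef.left, smul_smul, div_mul_cancel₀ _ hfe]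
  module

theorem scaling_apply_right : hB.scaling hef α f = (σ α)⁻¹ • f := by
  rw [scaling_apply, hef.right, smul_smul, smul_smul, div_mul_cancel₀ _ hef.ne]
  module

theorem scaling_apply_of_ortho {x : V} (hex : B e x = 0) (hfx : B f x = 0) :
    hB.scaling hef α x = x := by
  simp only [scaling_apply, hex, hfx, zero_smul, smul_zero, add_zero]

theorem commute_scaling {g : V ≃L[E] V} (hg : g ∈ isometriesFixing B {e, f}) :
    Commute g (hB.scaling hef α) := by
  have hge : g e = e := hg.2 e (by simp)
  have hgf : g f = f := hg.2 f (by simp)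
  have hBe : ∀ x, B e (g x) = B e x := fun x => by rw [← hg.1 e x, hge]
  have hBf : ∀ x, B f (g x) = B f x := fun x => by rw [← hg.1 f x, hgf]
  ext x
  calc g (hB.scaling hef α x)
      = g x + ((α - 1 : E) / B f e) • B f x • e + (((σ α)⁻¹ - 1) / B e f) • B e x • f := by
        simp only [scaling_apply, map_add, map_smul, hge, hgf]
    _ = hB.scaling hef α (g x) := by
        rw [scaling_apply, hBe, hBf]

theorem scaling_mem [RingHomInvPair σ σ] (hes : e ∈ orthogonalTo B s)
    (hfs : f ∈ orthogonalTo B s) :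
    hB.scaling hef α ∈ isometriesFixing B s := by
  refine ⟨fun x y => ?_, fun x hx => ?_⟩
  · have hfe := (hB.isHyperbolicPair_symm hef).ne
    have hef' := hef.ne
    have hσα : σ α ≠ 0 := (map_ne_zero σ).2 α.ne_zero
    have hσσ : σ (σ α) = α := RingHomInvPair.comp_apply_eq
    simp only [scaling_apply, map_add, map_smul, map_smulₛₗ, add_apply, smul_apply, smul_eq_mul,
      hef.left, hef.right, map_div₀, map_sub, map_one, map_inv₀, hB.symm, hσσ]
    field_simp
    ring
  · exact hB.scaling_apply_of_ortho hef α (hB.ortho_comm.1 (hes x hx))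
      (hB.ortho_comm.1 (hfs x hx))

theorem exists_norm_scaling_le [RingHomIsometric σ] :
    ∃ C > 0, ∀ (α : Eˣ) (r : ℝ), 1 ≤ r → ‖(α : E)‖ ≤ r → ‖(α : E)‖⁻¹ ≤ r →
      ‖(hB.scaling hef α : V →L[E] V)‖ ≤ C * r := by
  obtain ⟨C, hC, hnorm⟩ := exists_norm_hyperbolicDiag_le B e f
  refine ⟨C, hC, fun α r hr hα hα' => hnorm _ _ r hr hα ?_⟩
  rwa [norm_inv, RingHomIsometric.norm_map]

end IsHermitianForm

end HyperbolicPairs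

section Pairings

theorem apply_eq_zero_of_mem_span {x v : V} (hx : x ∈ Submodule.span E s)
    (hv : v ∈ orthogonalTo B s) : B x v = 0 := by
  induction hx using Submodule.span_induction with
  | mem x hx => exact hv x hx
  | zero => rw [map_zero, zero_apply]
  | add x y _ _ hxv hyv => rw [map_add, add_apply, hxv, hyv, add_zero]
  | smul c x _ hxv => rw [map_smulₛₗ, smul_apply, hxv, smul_zero]

namespace IsHermitianForm

theorem eq_zero_of_forall_mem_orthogonalTo (hB : IsHermitianForm B)
    (hs : Submodule.span E s ⊔ orthogonalTo B s = ⊤) {v : V} (hv : v ∈ orthogonalTo B s)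
    (h0 : ∀ u ∈ orthogonalTo B s, B u v = 0) : v = 0 := by
  refine hB.ext_right fun x => ?_
  obtain ⟨a, ha, b, hb, rfl⟩ := Submodule.mem_sup.1 (hs.ge (Submodule.mem_top (x := x)))
  rw [map_add, add_apply, apply_eq_zero_of_mem_span ha hv, h0 b hb, add_zero, map_zero]

theorem span_insert_sup_orthogonalTo (hs : Submodule.span E s ⊔ orthogonalTo B s = ⊤) {d : V}
    (hd : d ∈ orthogonalTo B s) (hdd : B d d ≠ 0) :
    Submodule.span E (insert d s) ⊔ orthogonalTo B (insert d s) = ⊤ := by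
  refine top_unique (hs.ge.trans (sup_le ?_ fun x hx => ?_))
  · exact (Submodule.span_mono (Set.subset_insert d s)).trans le_sup_left
  · rw [← add_sub_cancel ((B d x / B d d) • d) x]
    refine add_mem (Submodule.mem_sup_left (Submodule.smul_mem _ _ (Submodule.subset_span
      (Set.mem_insert d s)))) (Submodule.mem_sup_right ?_)
    rintro y (rfl | hy)
    · rw [map_sub, map_smul, smul_eq_mul, div_mul_cancel₀ _ hdd, sub_self]
    · rw [map_sub, map_smul, hx y hy, hd y hy, smul_zero, sub_zero]

theorem exists_norm_inv_le [RingHomIsometric σ] [CompleteSpace E] [FiniteDimensional E V]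
    (hB : IsHermitianForm B) :
    ∃ C > 0, ∀ g ∈ isometriesFixing B s, ‖((g⁻¹ : V ≃L[E] V) : V →L[E] V)‖ ≤
      C * ‖(g : V →L[E] V)‖ := by
  obtain ⟨K, hK, hanti⟩ := (B.flip : V →ₗ[E] V →SL[σ] E).exists_antilipschitzWith
    (LinearMap.ker_eq_bot'.2 fun y hy => hB.ext_right fun x => by
      rw [map_zero]; exact DFunLike.congr_fun hy x)
  refine ⟨K * (‖B‖ + 1), by positivity, fun g hg => opNorm_le_bound _ (by positivity) fun y => ?_⟩
  have hflip : ‖B.flip (g⁻¹ y)‖ ≤ ‖B‖ * ‖(g : V →L[E] V)‖ * ‖y‖ :=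
    opNorm_le_bound _ (by positivity) fun x =>
      calc ‖B x (g⁻¹ y)‖ = ‖B (g x) y‖ := by rw [← hg.1, apply_inv_self]
        _ ≤ ‖B‖ * (‖(g : V →L[E] V)‖ * ‖x‖) * ‖y‖ := by
            refine (B.le_opNorm₂ _ _).trans ?_
            gcongr
            exact (g : V →L[E] V).le_opNorm x
        _ = ‖B‖ * ‖(g : V →L[E] V)‖ * ‖y‖ * ‖x‖ := by ring
  calc ‖g⁻¹ y‖ ≤ K * ‖B.flip (g⁻¹ y)‖ := hanti.le_mul_norm (map_zero _) (g⁻¹ y)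
    _ ≤ K * ((‖B‖ + 1) * ‖(g : V →L[E] V)‖ * ‖y‖) := by
        gcongr
        exact hflip.trans (by gcongr; linarith)
    _ = K * (‖B‖ + 1) * ‖(g : V →L[E] V)‖ * ‖y‖ := by ring

end IsHermitianForm

theorem exists_finset_forall_norm_le [CompleteSpace E] [FiniteDimensional E V] {D : Set V}
    {U : Submodule E V} (hU : ∀ v ∈ U, (∀ x ∈ D, B x v = 0) → v = 0) :
    ∃ F : Finset V, ↑F ⊆ D ∧ ∃ δ > 0, ∀ v ∈ U, v ≠ 0 → ∃ x ∈ F, δ * ‖v‖ ≤ ‖B x v‖ := by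
  obtain ⟨F, hFD, hspan⟩ :=
    (Submodule.fg_span_iff_fg_span_finset_subset (R := E) D).1 (IsNoetherian.noetherian _)
  let T : U →ₗ[E] F → E := LinearMap.pi fun x => (B x : V →ₗ[E] E).comp U.subtype
  have hT : LinearMap.ker T = ⊥ := LinearMap.ker_eq_bot'.2 fun v hv => by
    refine Subtype.ext (hU v v.2 fun x hx => ?_)
    exact apply_eq_zero_of_mem_span (hspan.le (Submodule.subset_span hx))
      fun y hy => congrFun hv ⟨y, hy⟩
  obtain ⟨K, hK, hanti⟩ := T.exists_antilipschitzWith hT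
  have : (0 : ℝ) < K := hK
  refine ⟨F, hFD, (K : ℝ)⁻¹ / 2, by positivity, fun v hv hv0 => ?_⟩
  by_contra! hlt
  have hTv : ‖T ⟨v, hv⟩‖ ≤ (K : ℝ)⁻¹ / 2 * ‖v‖ :=
    (pi_norm_le_iff_of_nonneg (by positivity)).2 fun x => (hlt x x.2).le
  have hle : ‖v‖ ≤ ‖v‖ / 2 :=
    calc ‖v‖ ≤ K * ‖T ⟨v, hv⟩‖ := hanti.le_mul_norm (map_zero T) ⟨v, hv⟩
      _ ≤ K * ((K : ℝ)⁻¹ / 2 * ‖v‖) := by gcongr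
      _ = ‖v‖ / 2 := by field_simp
  exact hv0 (norm_le_zero_iff.1 (by linarith))

namespace IsHermitianForm

variable [RingHomIsometric σ] [CompleteSpace E] [FiniteDimensional E V] {e f : V}

theorem exists_isometry_apply_eq_of_isotropic (hB : IsHermitianForm B)
    (hes : e ∈ orthogonalTo B s) (he : B e e = 0) {d : V} (hds : d ∈ orthogonalTo B s)
    (hd : B d d = 0) (hed : B e d ≠ 0) : ∃ k ∈ isometriesFixing B s, k e = d := by
  have hde : B (e - d) e ≠ 0 := by
    rwa [map_sub, sub_apply, he, zero_sub, neg_ne_zero, Ne, hB.ortho_comm]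
  obtain ⟨k, hk, hke, -⟩ := hB.exists_isometry_apply_eq hes hds (he.trans hd.symm) hde
  exact ⟨k, hk, hke⟩

-- If `B e d ≠ 0`, then `d + t • e` is isotropic for a suitable `t`, hence in the orbit of `e`;
-- otherwise apply this to `d + f` and `f`.
theorem orthogonalTo_le_span_orbit [NeZero (2 : E)] (hB : IsHermitianForm B)
    (hef : IsHyperbolicPair B e f) (hes : e ∈ orthogonalTo B s) (hfs : f ∈ orthogonalTo B s) :
    orthogonalTo B s ≤ Submodule.span E {x | ∃ k ∈ isometriesFixing B s, k e = x} := by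
  set S := Submodule.span E {x | ∃ k ∈ isometriesFixing B s, k e = x}
  have heS : e ∈ S := Submodule.subset_span ⟨1, one_mem _, rfl⟩
  have hne : ∀ d ∈ orthogonalTo B s, B e d ≠ 0 → d ∈ S := fun d hd hed => by
    set t := -(2⁻¹ * B d d / B d e) with ht
    have hde : B d e ≠ 0 := fun h0 => hed (hB.ortho_comm.1 h0)
    have hiso : B (d + t • e) (d + t • e) = 0 := by
      simp only [ht, map_add, map_smul, map_smulₛₗ, add_apply, smul_apply, smul_eq_mul, map_neg,
        map_div₀, map_mul, map_inv₀, map_ofNat, hB.symm, hef.left]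
      field_simp
      ring
    have hed' : B e (d + t • e) ≠ 0 := by
      rwa [map_add, map_smul, hef.left, smul_zero, add_zero]
    rw [← add_sub_cancel_right d (t • e)]
    exact sub_mem (Submodule.subset_span <| hB.exists_isometry_apply_eq_of_isotropic hes hef.left
      (add_mem hd (Submodule.smul_mem _ t hes)) hiso hed') (Submodule.smul_mem _ t heS)
  intro d hd
  by_cases hed : B e d = 0
  · rw [← add_sub_cancel_right d f]
    refine sub_mem (hne _ (add_mem hd hfs) ?_) (hne f hfs hef.ne)
    rw [map_add, hed, zero_add]
    exact hef.ne
  · exact hne d hd hed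

theorem exists_bounded_pairing [NeZero (2 : E)] (hB : IsHermitianForm B)
    (hs : Submodule.span E s ⊔ orthogonalTo B s = ⊤) (hef : IsHyperbolicPair B e f)
    (hes : e ∈ orthogonalTo B s) (hfs : f ∈ orthogonalTo B s) :
    ∃ M > 0, ∃ δ > 0, ∀ v ∈ orthogonalTo B s, v ≠ 0 →
      ∃ k ∈ isometriesFixing B s, ‖(k : V →L[E] V)‖ ≤ M ∧ δ * ‖v‖ ≤ ‖B e (k v)‖ := by
  obtain ⟨F, hF, δ, hδ, hFδ⟩ := exists_finset_forall_norm_le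
    (D := {x | ∃ k ∈ isometriesFixing B s, k e = x}) fun v hv h0 =>
      hB.eq_zero_of_forall_mem_orthogonalTo hs hv fun u hu =>
        apply_eq_zero_of_mem_span (hB.orthogonalTo_le_span_orbit hef hes hfs hu) h0
  choose! k hk hke using show ∀ x ∈ F, ∃ k ∈ isometriesFixing B s, k e = x from fun x hx => hF hx
  refine ⟨1 + ∑ x ∈ F, ‖((k x)⁻¹ : V ≃L[E] V).toContinuousLinearMap‖, by positivity, δ, hδ,
    fun v hv hv0 => ?_⟩
  obtain ⟨x, hx, hle⟩ := hFδ v hv hv0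
  refine ⟨(k x)⁻¹, inv_mem (hk x hx), ?_, ?_⟩
  · have := F.single_le_sum (f := fun x => ‖((k x)⁻¹ : V ≃L[E] V).toContinuousLinearMap‖)
      (fun _ _ => norm_nonneg _) hx
    linarith
  · rwa [← (hk x hx).1, apply_inv_self, hke x hx]

end IsHermitianForm

end Pairings

section RankOne

theorem exists_unit_le_norm_le (E : Type*) [NontriviallyNormedField E] :
    ∃ q > 0, ∀ r > 0, ∃ β : Eˣ, r ≤ ‖(β : E)‖ ∧ ‖(β : E)‖ ≤ q * r := by
  obtain ⟨c, hc⟩ := NormedField.exists_one_lt_norm E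
  have hc0 : 0 < ‖c‖ := one_pos.trans hc
  refine ⟨‖c‖, hc0, fun r hr => ?_⟩
  obtain ⟨d, hd, hlt, hle, -⟩ := rescale_to_shell hc (mul_pos hc0 hr) (one_ne_zero (α := E))
  rw [smul_eq_mul, mul_one] at hlt hle
  exact ⟨Units.mk0 d hd, by rwa [mul_div_cancel_left₀ _ hc0.ne'] at hle, hlt.le⟩

theorem norm_coe_mul_le (g g' : V ≃L[E] V) :
    ‖((g * g' : V ≃L[E] V) : V →L[E] V)‖ ≤ ‖(g : V →L[E] V)‖ * ‖(g' : V →L[E] V)‖ :=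
  opNorm_comp_le (g : V →L[E] V) (g' : V →L[E] V)

section Domination

variable [RingHomIsometric σ]

theorem exists_pos_le_norm_of_apply_self_eq (B : V →SL[σ] V →L[E] E) {a : E}
    (ha : a ≠ 0) : ∃ x₀ > 0, ∀ v, B v v = a → x₀ ≤ ‖v‖ := by
  have : 0 < ‖a‖ := norm_pos_iff.2 ha
  refine ⟨√(‖a‖ / (‖B‖ + 1)), by positivity, fun v hv => Real.sqrt_le_iff.2 ⟨norm_nonneg v, ?_⟩⟩
  rw [div_le_iff₀ (by positivity), ← hv]
  nlinarith [B.le_opNorm₂ v v, sq_nonneg ‖v‖]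

theorem le_norm_apply_sub (B : V →SL[σ] V →L[E] E) (e f v : V) (c β : E) {γ : E} (hγ : ‖γ‖ ≤ 1) :
    ‖c‖ * (‖β‖ * ‖B e v‖) - ‖c‖ * (‖B‖ * ‖f‖ * ‖v‖) - ‖B‖ * ‖v‖ ^ 2 ≤
      ‖B (v - c • (β • e + γ • f)) v‖ := by
  have hexpand : σ c * (σ β * B e v) =
      B v v - σ c * (σ γ * B f v) - B (v - c • (β • e + γ • f)) v := by
    simp only [map_sub, map_add, map_smulₛₗ, sub_apply, add_apply, smul_apply, smul_eq_mul]
    ring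
  have hf : ‖γ‖ * ‖B f v‖ ≤ 1 * (‖B‖ * ‖f‖ * ‖v‖) := by
    gcongr
    exact B.le_opNorm₂ f v
  have hle : ‖c‖ * (‖β‖ * ‖B e v‖) ≤
      ‖B v v‖ + ‖c‖ * (‖γ‖ * ‖B f v‖) + ‖B (v - c • (β • e + γ • f)) v‖ :=
    calc ‖c‖ * (‖β‖ * ‖B e v‖) = ‖σ c * (σ β * B e v)‖ := by
          simp only [norm_mul, RingHomIsometric.norm_map]
      _ ≤ ‖B v v‖ + ‖σ c * (σ γ * B f v)‖ + ‖B (v - c • (β • e + γ • f)) v‖ := by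
          rw [hexpand]
          exact norm_sub_le_of_le (norm_sub_le _ _) le_rfl
      _ = _ := by simp only [norm_mul, RingHomIsometric.norm_map]
  nlinarith [B.le_opNorm₂ v v, mul_le_mul_of_nonneg_left hf (norm_nonneg c)]

-- For `‖β‖` of size `‖v‖` (up to a large constant), the term `β * B e v` dominates.
theorem exists_unit_norm_sq_le_norm_apply_sub (B : V →SL[σ] V →L[E] E) (e f : V) {a c : E}
    (ha : a ≠ 0) (hc : c ≠ 0) {δ : ℝ} (hδ : 0 < δ) :
    ∃ Y, ∀ v, B v v = a → δ * ‖v‖ ≤ ‖B e v‖ → 0 < ‖v‖ ∧ ∃ β : Eˣ, 1 ≤ ‖(β : E)‖ ∧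
      ∀ γ : E, ‖γ‖ ≤ 1 → ‖v‖ ^ 2 ≤ ‖B (v - c • ((β : E) • e + γ • f)) v‖ ∧
        ‖v - c • ((β : E) • e + γ • f)‖ ≤ Y * ‖v‖ := by
  have : 0 < ‖c‖ := norm_pos_iff.2 hc
  obtain ⟨x₀, hx₀, hxv⟩ := exists_pos_le_norm_of_apply_self_eq B ha
  obtain ⟨q, _, hshell⟩ := exists_unit_le_norm_le E
  set t := 1 + ‖B‖ + ‖c‖ * (‖B‖ * ‖f‖) / x₀ with ht
  set R := x₀⁻¹ + t / (‖c‖ * δ) with hR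
  refine ⟨1 + ‖c‖ * (q * R * ‖e‖ + ‖f‖ / x₀), fun v hva hve => ?_⟩
  have hv0 : 0 < ‖v‖ := hx₀.trans_le (hxv v hva)
  have hone : 1 ≤ ‖v‖ / x₀ := (one_le_div hx₀).2 (hxv v hva)
  obtain ⟨β, hβ, hβ'⟩ := hshell (R * ‖v‖) (by positivity)
  refine ⟨hv0, β, ?_, fun γ hγ => ⟨?_, ?_⟩⟩
  · refine le_trans ?_ hβ
    rw [hR, add_mul, inv_mul_eq_div]
    exact hone.trans (le_add_of_nonneg_right (by positivity))
  · have hdom : t * ‖v‖ ^ 2 ≤ ‖c‖ * (‖(β : E)‖ * ‖B e v‖) :=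
      calc t * ‖v‖ ^ 2 = ‖c‖ * (t / (‖c‖ * δ) * ‖v‖ * (δ * ‖v‖)) := by field_simp
        _ ≤ ‖c‖ * (‖(β : E)‖ * ‖B e v‖) := by
            gcongr
            refine le_trans ?_ hβ
            gcongr
            exact le_add_of_nonneg_left (by positivity)
    have hf : ‖c‖ * (‖B‖ * ‖f‖ * ‖v‖) ≤ ‖c‖ * (‖B‖ * ‖f‖) / x₀ * ‖v‖ ^ 2 :=
      calc ‖c‖ * (‖B‖ * ‖f‖ * ‖v‖) = ‖c‖ * (‖B‖ * ‖f‖) * ‖v‖ * 1 := by ring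
        _ ≤ ‖c‖ * (‖B‖ * ‖f‖) * ‖v‖ * (‖v‖ / x₀) := by gcongr
        _ = _ := by ring
    rw [ht] at hdom
    linarith [le_norm_apply_sub B e f v c β hγ]
  · calc ‖v - c • ((β : E) • e + γ • f)‖
        ≤ ‖v‖ + ‖c‖ * ‖(β : E) • e + γ • f‖ := norm_sub_le_of_le le_rfl (norm_smul _ _).le
      _ ≤ ‖v‖ + ‖c‖ * (‖(β : E)‖ * ‖e‖ + ‖γ‖ * ‖f‖) := by
          gcongr
          exact norm_add_le_of_le (norm_smul _ _).le (norm_smul _ _).le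
      _ ≤ ‖v‖ + ‖c‖ * (q * (R * ‖v‖) * ‖e‖ + ‖v‖ / x₀ * ‖f‖) := by
          gcongr
          exact hγ.trans hone
      _ = (1 + ‖c‖ * (q * R * ‖e‖ + ‖f‖ / x₀)) * ‖v‖ := by ring

end Domination

namespace IsHermitianForm

variable {e f u : V}

theorem scaling_inv_apply_smul_add (hB : IsHermitianForm B) (hef : IsHyperbolicPair B e f)
    (α : Eˣ) (c : E) :
    (hB.scaling hef α)⁻¹ (c • (e + f)) = c • ((α⁻¹ : E) • e + σ α • f) := by
  rw [← map_inv, map_smul, map_add, scaling_apply_left, scaling_apply_right,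
    Units.val_inv_eq_inv_val, map_inv₀, inv_inv]

variable [RingHomIsometric σ] [RingHomInvPair σ σ] [CompleteSpace E] [FiniteDimensional E V]

theorem exists_bounded_apply_eq_scaling_inv (hB : IsHermitianForm B) (hef : IsHyperbolicPair B e f)
    (hes : e ∈ orthogonalTo B s) (hfs : f ∈ orthogonalTo B s) {c : E} (hu : u = c • (e + f))
    (huu : B u u ≠ 0) {δ : ℝ} (hδ : 0 < δ) :
    ∃ M, ∀ v ∈ orthogonalTo B s, B v v = B u u → δ * ‖v‖ ≤ ‖B e v‖ →
      ∃ α : Eˣ, ‖(α : E)‖ ≤ 1 ∧ ∃ k ∈ isometriesFixing B s, ‖(k : V →L[E] V)‖ ≤ M ∧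
        k v = (hB.scaling hef α)⁻¹ u := by
  have hc : c ≠ 0 := fun h0 => huu (by rw [hu, h0, zero_smul, map_zero])
  obtain ⟨Y, hY⟩ := exists_unit_norm_sq_le_norm_apply_sub B e f huu hc hδ
  refine ⟨1 + ‖B‖ * Y ^ 2, fun v hv hvu hve => ?_⟩
  obtain ⟨hv0, β, hβ, hβv⟩ := hY v hvu hve
  have hβ' : ‖((β⁻¹ : Eˣ) : E)‖ ≤ 1 := by
    rw [Units.val_inv_eq_inv_val, norm_inv]
    exact inv_le_one_of_one_le₀ hβ
  have ha := inv_mem (hB.scaling_mem hef β⁻¹ hes hfs)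
  obtain ⟨hlow, hup⟩ := hβv (σ ((β⁻¹ : Eˣ) : E)) (by rwa [RingHomIsometric.norm_map])
  rw [← inv_inv (β : E), ← Units.val_inv_eq_inv_val, ← scaling_inv_apply_smul_add hB hef, ← hu]
    at hlow hup
  have hv2 : 0 < ‖v‖ ^ 2 := by positivity
  obtain ⟨k, hk, hkv, hkM⟩ := hB.exists_isometry_apply_eq hv
    (apply_mem_orthogonalTo ha (hu ▸ Submodule.smul_mem _ c (add_mem hes hfs)))
    (hvu.trans (ha.1 u u).symm) (norm_pos_iff.1 (hv2.trans_le hlow))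
  refine ⟨β⁻¹, hβ', k, hk, hkM.trans ?_, hkv⟩
  gcongr
  rw [div_le_iff₀ (hv2.trans_le hlow)]
  calc ‖B‖ * ‖v - (hB.scaling hef β⁻¹)⁻¹ u‖ ^ 2 ≤ ‖B‖ * (Y * ‖v‖) ^ 2 := by gcongr
    _ = ‖B‖ * Y ^ 2 * ‖v‖ ^ 2 := by ring
    _ ≤ _ := by gcongr

theorem exists_rankOne_decomposition [NeZero (2 : E)] (hB : IsHermitianForm B)
    (hs : Submodule.span E s ⊔ orthogonalTo B s = ⊤) (hef : IsHyperbolicPair B e f)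
    (hes : e ∈ orthogonalTo B s) (hfs : f ∈ orthogonalTo B s) {c : E} (hu : u = c • (e + f))
    (huu : B u u ≠ 0) :
    ∃ M, ∀ g ∈ isometriesFixing B s, ∃ b ∈ isometriesFixing B (insert u s), ∃ α : Eˣ,
      ‖(α : E)‖ ≤ 1 ∧ ∃ k ∈ isometriesFixing B s, ‖(k : V →L[E] V)‖ ≤ M ∧
        g = b * hB.scaling hef α * k := by
  obtain ⟨M₁, hM₁, δ, hδ, hpair⟩ := hB.exists_bounded_pairing hs hef hes hfs
  obtain ⟨M₂, hM₂⟩ := hB.exists_bounded_apply_eq_scaling_inv hef hes hfs hu huu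
    (div_pos hδ hM₁)
  refine ⟨M₂ * M₁, fun g hg => ?_⟩
  have hu0 : g⁻¹ u ≠ 0 := fun h0 => huu (by
    rw [← apply_inv_self g u, h0, map_zero, map_zero])
  have huΓ : u ∈ orthogonalTo B s := hu ▸ Submodule.smul_mem _ c (add_mem hes hfs)
  have hus := apply_mem_orthogonalTo (inv_mem hg) huΓ
  obtain ⟨k₁, hk₁, hk₁M, hpair₁⟩ := hpair _ hus hu0
  obtain ⟨α, hα, k₂, hk₂, hk₂M, hk₂u⟩ := hM₂ (k₁ (g⁻¹ u)) (apply_mem_orthogonalTo hk₁ hus)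
    (by rw [hk₁.1, (inv_mem hg).1]) <|
    calc δ / M₁ * ‖k₁ (g⁻¹ u)‖ ≤ δ / M₁ * (M₁ * ‖g⁻¹ u‖) := by
          gcongr
          exact (k₁ : V →L[E] V).le_of_opNorm_le hk₁M _
      _ ≤ ‖B e (k₁ (g⁻¹ u))‖ := by rwa [← mul_assoc, div_mul_cancel₀ _ hM₁.ne']
  have ha := hB.scaling_mem hef α hes hfs
  have hb : g * (k₂ * k₁)⁻¹ * (hB.scaling hef α)⁻¹ ∈ isometriesFixing B s :=
    mul_mem (mul_mem hg (inv_mem (mul_mem hk₂ hk₁))) (inv_mem ha)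
  refine ⟨_, ⟨hb.1, ?_⟩, α, hα, k₂ * k₁, mul_mem hk₂ hk₁, ?_, by group⟩
  · rintro x (rfl | hx)
    · calc g ((k₂ * k₁)⁻¹ ((hB.scaling hef α)⁻¹ x)) = g ((k₂ * k₁)⁻¹ ((k₂ * k₁) (g⁻¹ x))) := by
            rw [← hk₂u]; rfl
        _ = x := by rw [inv_apply_self, apply_inv_self]
    · exact hb.2 x hx
  · exact (norm_coe_mul_le k₂ k₁).trans (mul_le_mul hk₂M hk₁M (norm_nonneg _)
      ((norm_nonneg _).trans hk₂M))

end IsHermitianForm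

end RankOne

section BoundedOpenSubgroup

theorem exists_bounded_open_subgroup (E V : Type*) [NontriviallyNormedField E] [CompleteSpace E]
    [IsUltrametricDist E] [NormedAddCommGroup V] [NormedSpace E V] [FiniteDimensional E V] :
    ∃ K : Subgroup (V ≃L[E] V),
      (∃ r > 0, ∀ g : V ≃L[E] V, ‖(g : V →L[E] V) - ContinuousLinearMap.id E V‖ ≤ r → g ∈ K) ∧
      ∃ M > 0, ∀ g ∈ K, ‖(g : V →L[E] V)‖ ≤ M := by
  let W := Fin (Module.finrank E V) → E
  let φ : V ≃L[E] W := (Module.finBasis E V).equivFunL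
  set p := ‖(φ : V →L[E] W)‖
  set q := ‖(φ.symm : W →L[E] V)‖
  have hφ : ∀ v, ‖φ v‖ ≤ p * ‖v‖ := (φ : V →L[E] W).le_opNorm
  have hφ' : ∀ v, ‖v‖ ≤ q * ‖φ v‖ := fun v => by
    simpa only [ContinuousLinearEquiv.coe_coe, φ.symm_apply_apply] using
      (φ.symm : W →L[E] V).le_opNorm (φ v)
  let K : Subgroup (V ≃L[E] V) :=
    { carrier := {g | ∀ v, ‖φ (g v)‖ = ‖φ v‖}
      one_mem' := fun _ => rfl
      mul_mem' := fun {g g'} hg hg' v => (hg (g' v)).trans (hg' v)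
      inv_mem' := fun {g} hg v => by
        simpa only [apply_inv_self] using (hg (g⁻¹ v)).symm }
  refine ⟨K, ⟨(p * q + 1)⁻¹, by positivity, fun g hg v => ?_⟩, q * p + 1, by positivity,
    fun g hg => opNorm_le_bound _ (by positivity) fun v => ?_⟩
  · have hsub : ‖φ (g v) - φ v‖ ≤ p * ((p * q + 1)⁻¹ * (q * ‖φ v‖)) :=
      calc ‖φ (g v) - φ v‖ = ‖φ (((g : V →L[E] V) - ContinuousLinearMap.id E V) v)‖ := by
            rw [← map_sub]; rfl
        _ ≤ p * ((p * q + 1)⁻¹ * ‖v‖) :=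
            (hφ _).trans (by gcongr; exact le_of_opNorm_le _ hg v)
        _ ≤ _ := by gcongr; exact hφ' v
    rcases eq_or_ne v 0 with rfl | hv
    · rw [map_zero]
    · have hv' : 0 < ‖φ v‖ := norm_pos_iff.2 (φ.map_ne_zero_iff.2 hv)
      have hlt : ‖φ (g v) - φ v‖ < ‖φ v‖ := hsub.trans_lt <| by
        rw [← mul_assoc, ← mul_assoc, mul_right_comm p, ← div_eq_mul_inv]
        exact mul_lt_of_lt_one_left hv' ((div_lt_one (by positivity)).2 (lt_add_one _))
      exact (IsUltrametricDist.norm_eq_of_add_norm_lt_max (y := -φ v) (by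
        rw [← sub_eq_add_neg]; exact hlt.trans_le (le_max_of_le_right (norm_neg _).ge))).trans
          (norm_neg _)
  · calc ‖g v‖ ≤ q * ‖φ (g v)‖ := hφ' _
      _ = q * ‖φ v‖ := by rw [hg]
      _ ≤ q * (p * ‖v‖) := by gcongr; exact hφ v
      _ ≤ (q * p + 1) * ‖v‖ := by nlinarith [norm_nonneg v]

end BoundedOpenSubgroup

section Growth

variable [RingHomIsometric σ]

theorem norm_mul_norm_apply_le {t : V ≃L[E] V} (ht : t ∈ isometriesFixing B s) {z z' u y : V}
    {γ c d : E} {r : ℝ} (hr : 0 ≤ r) (hz : t z = γ • z) (hz' : t z' = (σ γ)⁻¹ • z')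
    (hγ0 : γ ≠ 0) (hγ : ‖γ‖ ≤ 1) (hu : u = d • (z + z')) (hle : ‖t (u + c • y)‖ ≤ r * ‖t u‖) :
    ‖c‖ * ‖B z y‖ ≤ ‖B‖ * ‖z‖ * (r * (‖d‖ * (‖z‖ + ‖z'‖))) + ‖B z u‖ := by
  have hγ' : 0 < ‖γ‖ := norm_pos_iff.2 hγ0
  have hγinv : ‖γ‖ ≤ ‖γ‖⁻¹ := hγ.trans (one_le_inv₀ hγ' |>.2 hγ)
  have htu : ‖t u‖ ≤ ‖d‖ * (‖z‖ + ‖z'‖) * ‖γ‖⁻¹ :=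
    calc ‖t u‖ = ‖d‖ * ‖γ • z + (σ γ)⁻¹ • z'‖ := by
          rw [hu, map_smul, map_add, hz, hz', norm_smul]
      _ ≤ ‖d‖ * (‖γ‖ * ‖z‖ + ‖γ‖⁻¹ * ‖z'‖) := by
          gcongr
          refine norm_add_le_of_le (norm_smul _ _).le ?_
          rw [norm_smul, norm_inv, RingHomIsometric.norm_map]
      _ ≤ ‖d‖ * (‖γ‖⁻¹ * ‖z‖ + ‖γ‖⁻¹ * ‖z'‖) := by gcongr
      _ = _ := by ring
  have hzv : ‖B z (u + c • y)‖ ≤ ‖B‖ * ‖z‖ * (r * (‖d‖ * (‖z‖ + ‖z'‖))) :=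
    calc ‖B z (u + c • y)‖ = ‖γ‖ * ‖B z (t (u + c • y))‖ := by
          rw [← ht.1, hz, map_smulₛₗ, smul_apply, norm_smul, RingHomIsometric.norm_map]
      _ ≤ ‖γ‖ * (‖B‖ * ‖z‖ * (r * (‖d‖ * (‖z‖ + ‖z'‖) * ‖γ‖⁻¹))) := by
          gcongr
          refine (B.le_opNorm₂ _ _).trans ?_
          gcongr
          exact hle.trans (by gcongr)
      _ = ‖B‖ * ‖z‖ * (r * (‖d‖ * (‖z‖ + ‖z'‖))) := by field_simp
  calc ‖c‖ * ‖B z y‖ = ‖B z (u + c • y) - B z u‖ := by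
        rw [← map_sub, add_sub_cancel_left, map_smul, norm_smul]
    _ ≤ _ := norm_sub_le_of_le hzv le_rfl

-- Conjugation by `scaling α` turns `E(u, y)` into `E((scaling α)⁻¹ u, y)`, and
-- `(scaling α)⁻¹ u` has size at most of order `‖α‖⁻¹`.
theorem IsHermitianForm.exists_conj_eichler_sub_id_le [RingHomInvPair σ σ]
    (hB : IsHermitianForm B) {e f : V} (hef : IsHyperbolicPair B e f) (u : V) {r : ℝ} (hr : 0 < r) :
    ∃ δ > 0, ∀ α : Eˣ, ‖(α : E)‖ ≤ 1 → ∀ y, B e y = 0 → B f y = 0 → ‖y‖ ≤ δ * ‖(α : E)‖ →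
      ∀ p : V ≃L[E] V, (p : V →L[E] V) = eichler B u y →
        ‖(((hB.scaling hef α)⁻¹ * p * hB.scaling hef α : V ≃L[E] V) : V →L[E] V) -
          ContinuousLinearMap.id E V‖ ≤ r := by
  obtain ⟨C, hC, hscale⟩ := hB.exists_norm_scaling_le hef
  set T := ‖(B u u)⁻¹‖ * ‖B‖ * (2 * (C * ‖u‖) + ‖(2 : E)⁻¹‖) with hT
  refine ⟨min 1 (r / (T + 1)), by positivity, fun α hα y hey hfy hy p hp => ?_⟩
  set a := hB.scaling hef α with ha
  have hα0 : 0 < ‖(α : E)‖ := norm_pos_iff.2 α.ne_zero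
  have hone : 1 ≤ ‖(α : E)‖⁻¹ := (one_le_inv₀ hα0).2 hα
  have haΓ : a ∈ isometriesFixing B ∅ :=
    hB.scaling_mem hef α (fun _ h => h.elim) (fun _ h => h.elim)
  have hay : a⁻¹ y = y := by
    rw [ha, ← map_inv, hB.scaling_apply_of_ortho hef _ hey hfy]
  have hau : ‖a⁻¹ u‖ ≤ C * ‖(α : E)‖⁻¹ * ‖u‖ := by
    refine le_of_opNorm_le ((a⁻¹ : V ≃L[E] V) : V →L[E] V) ?_ u
    rw [ha, ← map_inv]
    refine hscale _ _ hone ?_ ?_ <;> rw [Units.val_inv_eq_inv_val, norm_inv]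
    rw [inv_inv]
    exact hα.trans hone
  have hy2 : ‖y‖ ≤ ‖(α : E)‖⁻¹ :=
    (hy.trans (mul_le_one₀ (min_le_left _ _) hα0.le hα)).trans hone
  rw [inv_mul_mul_eq_eichler haΓ hp, hay]
  refine (norm_eichler_sub_id_le _ _).trans ?_
  rw [(inv_mem haΓ).1]
  calc ‖(B u u)⁻¹‖ * (‖B‖ * ‖y‖ * (2 * ‖a⁻¹ u‖ + ‖(2 : E)⁻¹‖ * ‖y‖))
      ≤ ‖(B u u)⁻¹‖ * (‖B‖ * (r / (T + 1) * ‖(α : E)‖) *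
          (2 * (C * ‖(α : E)‖⁻¹ * ‖u‖) + ‖(2 : E)⁻¹‖ * ‖(α : E)‖⁻¹)) := by
        gcongr
        exact hy.trans (by gcongr; exact min_le_right _ _)
    _ = T / (T + 1) * r := by rw [hT]; field_simp
    _ ≤ r := mul_le_of_le_one_left hr.le (div_le_one_of_le₀ (by linarith) (by positivity))

end Growth

section Frames

/-- The vectors `w 0, …, w l` are pairwise orthogonal and anisotropic, and the values
`B (w i) (w i)` alternate in sign, so that `w i + w (i + 1)` and `w i - w (i + 1)` form a
hyperbolic pair. -/
structure IsAlternatingFrame (B : V →SL[σ] V →L[E] E) (l : ℕ) (w : ℕ → V) : Prop where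
  ortho : ∀ i ≤ l, ∀ j ≤ l, i ≠ j → B (w i) (w j) = 0
  zero_ne : B (w 0) (w 0) ≠ 0
  neg : ∀ i < l, B (w (i + 1)) (w (i + 1)) = -B (w i) (w i)

/-- The isometries that fix the first `j` vectors of the sequence `w`. -/
abbrev initialStabilizer (B : V →SL[σ] V →L[E] E) (w : ℕ → V) (j : ℕ) : Subgroup (V ≃L[E] V) :=
  isometriesFixing B (w '' Set.Iio j)

/-- The sequence `w` with the sign of every other vector reversed. Up to sign, this exchanges
`w i + w (i + 1)` and `w i - w (i + 1)`, hence inverts the torus elements of a frame. -/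
def alternate (w : ℕ → V) (i : ℕ) : V := (-1 : ℤˣ) ^ i • w i

/-- The isometry `t` lies in the positive chamber of the split torus of the frame
`w j, w (j + 1), …, w l`: it multiplies `w (j + 2 * i) ± w (j + 2 * i + 1)` by `α i` and
`(σ (α i))⁻¹`, fixes the vectors orthogonal to all of these, and `‖α 0‖ ≤ ‖α 1‖ ≤ … ≤ 1`. -/
structure IsChamberElement (B : V →SL[σ] V →L[E] E) (l : ℕ) (w : ℕ → V) (j : ℕ) (α : ℕ → Eˣ)
    (t : V ≃L[E] V) : Prop where
  mem : t ∈ initialStabilizer B w j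
  apply_add : ∀ i, j + 2 * i + 1 ≤ l →
    t (w (j + 2 * i) + w (j + 2 * i + 1)) = (α i : E) • (w (j + 2 * i) + w (j + 2 * i + 1))
  apply_sub : ∀ i, j + 2 * i + 1 ≤ l →
    t (w (j + 2 * i) - w (j + 2 * i + 1)) = (σ (α i))⁻¹ • (w (j + 2 * i) - w (j + 2 * i + 1))
  apply_of_ortho : ∀ v, (∀ i, j + 2 * i + 1 ≤ l →
    B (w (j + 2 * i)) v = 0 ∧ B (w (j + 2 * i + 1)) v = 0) → t v = v
  norm_le_one : ∀ i, j + 2 * i + 1 ≤ l → ‖(α i : E)‖ ≤ 1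
  norm_le_succ : ∀ i, j + 2 * (i + 1) + 1 ≤ l → ‖(α i : E)‖ ≤ ‖(α (i + 1) : E)‖

theorem image_Iio_succ {X : Type*} (w : ℕ → X) (j : ℕ) :
    w '' Set.Iio (j + 1) = insert (w j) (w '' Set.Iio j) := by
  rw [← Set.image_insert_eq, ← Order.succ_eq_add_one, Order.Iio_succ_eq_insert]

theorem initialStabilizer_anti (w : ℕ → V) : Antitone (initialStabilizer B w) :=
  fun _ _ hij => isometriesFixing_mono (Set.image_mono (Set.Iio_subset_Iio hij))

theorem apply_eq_of_mem_initialStabilizer {w : ℕ → V} {i j : ℕ} {g : V ≃L[E] V}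
    (hg : g ∈ initialStabilizer B w j) (hij : i < j) : g (w i) = w i :=
  hg.2 _ (Set.mem_image_of_mem w hij)

theorem initialStabilizer_alternate (w : ℕ → V) (j : ℕ) :
    initialStabilizer B (alternate w) j = initialStabilizer B w j := by
  ext g
  refine and_congr_right fun _ => ?_
  simp only [Set.forall_mem_image, alternate]
  exact forall₂_congr fun i _ => by
    rw [Units.smul_def, map_zsmul, ← Units.smul_def, ← Units.smul_def, smul_left_cancel_iff]

theorem map_units_smul_eq_smul_iff (ε : ℤˣ) (t : V ≃L[E] V) (c : E) (x : V) :
    t (ε • x) = c • ε • x ↔ t x = c • x := by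
  rcases Int.units_eq_one_or ε with rfl | rfl <;> simp

theorem eq_inv_two_smul_add_add_sub [NeZero (2 : E)] (x y : V) :
    x = (2 : E)⁻¹ • (x + y + (x - y)) := by
  rw [add_add_sub_cancel, ← two_smul E, inv_smul_smul₀ two_ne_zero]

theorem add_alternate_succ (w : ℕ → V) (i : ℕ) :
    alternate w i + alternate w (i + 1) = (-1 : ℤˣ) ^ i • (w i - w (i + 1)) := by
  simp [alternate, pow_succ, sub_eq_add_neg]

theorem sub_alternate_succ (w : ℕ → V) (i : ℕ) :
    alternate w i - alternate w (i + 1) = (-1 : ℤˣ) ^ i • (w i + w (i + 1)) := by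
  simp [alternate, pow_succ]

namespace IsAlternatingFrame

variable {l j : ℕ} {w : ℕ → V} (hw : IsAlternatingFrame B l w)
include hw

theorem self_ne_zero {i : ℕ} (hi : i ≤ l) : B (w i) (w i) ≠ 0 := by
  induction i with
  | zero => exact hw.zero_ne
  | succ i ih => rw [hw.neg i hi, neg_ne_zero]; exact ih (by omega)

theorem isHyperbolicPair [NeZero (2 : E)] (hj : j < l) :
    IsHyperbolicPair B (w j + w (j + 1)) (w j - w (j + 1)) := by
  have h01 := hw.ortho j hj.le (j + 1) hj (by omega)
  have h10 := hw.ortho (j + 1) hj j hj.le (by omega)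
  constructor <;>
    simp only [map_add, map_sub, add_apply, sub_apply, h01, h10, hw.neg j hj, sub_zero, add_zero,
      zero_add, add_neg_cancel, sub_neg_eq_add, sub_self]
  rw [← two_mul]
  exact mul_ne_zero two_ne_zero (hw.self_ne_zero hj.le)

theorem mem_orthogonalTo {i : ℕ} (hji : j ≤ i) (hi : i ≤ l) :
    w i ∈ orthogonalTo B (w '' Set.Iio j) := by
  rintro _ ⟨m, hm : m < j, rfl⟩
  exact hw.ortho m (by omega) i hi (by omega)

theorem scaling_mem_initialStabilizer [RingHomInvPair σ σ] [NeZero (2 : E)]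
    (hB : IsHermitianForm B) (hj : j < l) (α : Eˣ) :
    hB.scaling (hw.isHyperbolicPair hj) α ∈ initialStabilizer B w j :=
  hB.scaling_mem _ α
    (add_mem (hw.mem_orthogonalTo le_rfl hj.le) (hw.mem_orthogonalTo (by omega) hj))
    (sub_mem (hw.mem_orthogonalTo le_rfl hj.le) (hw.mem_orthogonalTo (by omega) hj))

theorem span_sup_orthogonalTo (hj : j ≤ l + 1) :
    Submodule.span E (w '' Set.Iio j) ⊔ orthogonalTo B (w '' Set.Iio j) = ⊤ := by
  induction j with
  | zero => exact sup_eq_right.2 (by simp) |>.trans (top_unique fun v _ => by simp [orthogonalTo])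
  | succ j ih =>
    rw [image_Iio_succ]
    exact IsHermitianForm.span_insert_sup_orthogonalTo (ih (by omega))
      (hw.mem_orthogonalTo le_rfl (by omega)) (hw.self_ne_zero (by omega))

theorem alternate : IsAlternatingFrame B l (alternate w) where
  ortho i hi j hj hij := by
    rcases neg_one_pow_eq_or ℤˣ i with h | h <;> rcases neg_one_pow_eq_or ℤˣ j with h' | h' <;>
      simp [_root_.alternate, h, h', hw.ortho i hi j hj hij]
  zero_ne := by simpa [_root_.alternate] using hw.zero_ne
  neg i hi := by
    rcases neg_one_pow_eq_or ℤˣ i with h | h <;>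
      simp [_root_.alternate, pow_succ, h, hw.neg i hi]

end IsAlternatingFrame

namespace IsChamberElement

variable {l j : ℕ} {w : ℕ → V} {t : V ≃L[E] V} {β : ℕ → Eˣ}

theorem inv_of_alternate [RingHomIsometric σ] [RingHomInvPair σ σ]
    (ht : IsChamberElement B l (alternate w) j β t) :
    IsChamberElement B l w j (fun i => Units.map σ (β i)) t⁻¹ where
  mem := inv_mem (initialStabilizer_alternate (B := B) w j ▸ ht.mem)
  apply_add i hi := by
    have h := ht.apply_sub i hi
    rw [sub_alternate_succ, map_units_smul_eq_smul_iff] at h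
    refine t.symm_apply_eq.2 ?_
    rw [map_smul, h, Units.coe_map, MonoidHom.coe_coe,
      smul_inv_smul₀ ((map_ne_zero σ).2 (β i).ne_zero)]
  apply_sub i hi := by
    have h := ht.apply_add i hi
    rw [add_alternate_succ, map_units_smul_eq_smul_iff] at h
    refine t.symm_apply_eq.2 ?_
    rw [map_smul, h, Units.coe_map, MonoidHom.coe_coe, RingHomInvPair.comp_apply_eq,
      inv_smul_smul₀ (β i).ne_zero]
  apply_of_ortho v hv := t.symm_apply_eq.2 (ht.apply_of_ortho v fun i hi => by
    rcases neg_one_pow_eq_or ℤˣ (j + 2 * i) with h | h <;>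
      simp [alternate, pow_succ, h, hv i hi]).symm
  norm_le_one i hi := by simpa [RingHomIsometric.norm_map] using ht.norm_le_one i hi
  norm_le_succ i hi := by simpa [RingHomIsometric.norm_map] using ht.norm_le_succ i hi

theorem mul_scaling [RingHomInvPair σ σ] [NeZero (2 : E)] (hB : IsHermitianForm B)
    (hw : IsAlternatingFrame B l w) (hj : j < l) (ht : IsChamberElement B l w (j + 2) β t)
    {α : Eˣ} (hα : ‖(α : E)‖ ≤ 1) (hαβ : j + 3 ≤ l → ‖(α : E)‖ ≤ ‖(β 0 : E)‖) :
    IsChamberElement B l w j (fun i => i.casesOn α β)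
      (t * hB.scaling (hw.isHyperbolicPair hj) α) := by
  have hta : t * hB.scaling (hw.isHyperbolicPair hj) α ∈ initialStabilizer B w j :=
    mul_mem (initialStabilizer_anti w (by omega) ht.mem)
      (hw.scaling_mem_initialStabilizer hB hj α)
  have htj : t (w j) = w j := apply_eq_of_mem_initialStabilizer ht.mem (by omega)
  have htj' : t (w (j + 1)) = w (j + 1) := apply_eq_of_mem_initialStabilizer ht.mem (by omega)
  have hfix : ∀ v, B (w j) v = 0 → B (w (j + 1)) v = 0 →
      (t * hB.scaling (hw.isHyperbolicPair hj) α) v = t v := fun v h h' =>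
    congrArg t (hB.scaling_apply_of_ortho _ _ (by simp [h, h']) (by simp [h, h']))
  have hfixw : ∀ i, j + 2 ≤ i → i ≤ l →
      (t * hB.scaling (hw.isHyperbolicPair hj) α) (w i) = t (w i) := fun i hi hil =>
    hfix _ (hw.ortho _ (by omega) _ hil (by omega)) (hw.ortho _ (by omega) _ hil (by omega))
  refine ⟨hta, ?_, ?_, fun v hv => ?_, ?_, ?_⟩
  · rintro (_ | i) hi
    · exact (congrArg t (hB.scaling_apply_left _ _)).trans
        (by rw [map_smul, map_add, htj, htj']; rfl)
    · rw [Nat.mul_succ, ← add_assoc, add_right_comm _ _ 2] at hi ⊢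
      rw [map_add, hfixw _ (by omega) (by omega), hfixw _ (by omega) hi, ← map_add]
      exact ht.apply_add i hi
  · rintro (_ | i) hi
    · exact (congrArg t (hB.scaling_apply_right _ _)).trans
        (by rw [map_smul, map_sub, htj, htj']; rfl)
    · rw [Nat.mul_succ, ← add_assoc, add_right_comm _ _ 2] at hi ⊢
      rw [map_sub, hfixw _ (by omega) (by omega), hfixw _ (by omega) hi, ← map_sub]
      exact ht.apply_sub i hi
  · rw [hfix v (hv 0 hj).1 (hv 0 hj).2]
    refine ht.apply_of_ortho v fun i hi => ?_
    rw [add_right_comm]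
    exact hv (i + 1) (by omega)
  · rintro (_ | i) hi
    · exact hα
    · exact ht.norm_le_one i (by omega)
  · rintro (_ | i) hi
    · exact hαβ (by omega)
    · exact ht.norm_le_succ i (by omega)

end IsChamberElement

end Frames

section NearlyMaximal

theorem exists_forall_norm_mul_apply_le {P : Subgroup (V ≃L[E] V)} {C : ℝ}
    (hP : ∀ p ∈ P, ‖(p : V →L[E] V)‖ ≤ C) (b : V ≃L[E] V) {v : V} (hv : v ≠ 0) :
    ∃ p ∈ P, ∀ p' ∈ P, ‖(b * p') v‖ ≤ 2 * ‖(b * p) v‖ := by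
  let φ : P → ℝ := fun p => ‖(b * p) v‖
  have hφ : BddAbove (Set.range φ) := by
    refine ⟨‖(b : V →L[E] V)‖ * C * ‖v‖, ?_⟩
    rintro _ ⟨p, rfl⟩
    refine le_of_opNorm_le ((b * p : V ≃L[E] V) : V →L[E] V) ((norm_coe_mul_le _ _).trans ?_) v
    gcongr
    exact hP p p.2
  have hpos : 0 < φ 1 := norm_pos_iff.2 ((b * (1 : P)).map_ne_zero_iff.2 hv)
  obtain ⟨p, hp⟩ := exists_lt_of_lt_ciSup (half_lt_self (hpos.trans_le (le_ciSup hφ 1)))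
  exact ⟨p, p.2, fun p' hp' => (le_ciSup hφ ⟨p', hp'⟩).trans (by linarith)⟩

-- `b` may be replaced by `b * p` for any `p` that fixes `u` and whose conjugate by the scaling is
-- bounded. Taking `p` to make `‖(b * p) v‖` nearly maximal, the competitors include the `E(v, y)`.
theorem IsHermitianForm.exists_nearly_maximal_rankOne_decomposition [RingHomIsometric σ]
    [RingHomInvPair σ σ] [CompleteSpace E] [IsUltrametricDist E] [FiniteDimensional E V]
    [NeZero (2 : E)] (hB : IsHermitianForm B) (hs : Submodule.span E s ⊔ orthogonalTo B s = ⊤)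
    {e f : V} (hef : IsHyperbolicPair B e f) (hes : e ∈ orthogonalTo B s)
    (hfs : f ∈ orthogonalTo B s) {u : V} {c : E} (hu : u = c • (e + f)) (huu : B u u ≠ 0)
    {v : V} (hv : v ∈ orthogonalTo B (insert u s)) (hvv : B v v ≠ 0) :
    ∃ M, ∃ δ > 0, ∀ g ∈ isometriesFixing B s, ∃ b ∈ isometriesFixing B (insert u s), ∃ α : Eˣ,
      ‖(α : E)‖ ≤ 1 ∧ (∃ k ∈ isometriesFixing B s, ‖(k : V →L[E] V)‖ ≤ M ∧
        g = b * hB.scaling hef α * k) ∧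
      ∀ y ∈ orthogonalTo B (insert v s), B e y = 0 → B f y = 0 → B y y = 0 →
        ‖y‖ ≤ δ * ‖(α : E)‖ → ‖b (v + y)‖ ≤ 2 * ‖b v‖ := by
  obtain ⟨M, hM⟩ := hB.exists_rankOne_decomposition hs hef hes hfs hu huu
  obtain ⟨K, ⟨r, hr, hrK⟩, C, hC, hK⟩ := exists_bounded_open_subgroup E V
  obtain ⟨δ, hδ, hconj⟩ := hB.exists_conj_eichler_sub_id_le hef v hr
  refine ⟨C * M, δ, hδ, fun g hg => ?_⟩
  obtain ⟨b, hb, α, hα, k, hk, hkM, rfl⟩ := hM g hg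
  set a := hB.scaling hef α with ha
  have haΓ : a ∈ isometriesFixing B s := hB.scaling_mem hef α hes hfs
  let P := isometriesFixing B (insert u s) ⊓ K.map (MulAut.conj a).toMonoidHom
  have hP : ∀ p ∈ P, ‖(p : V →L[E] V)‖ ≤
      ‖(a : V →L[E] V)‖ * C * ‖((a⁻¹ : V ≃L[E] V) : V →L[E] V)‖ := by
    rintro _ ⟨-, κ, hκ, rfl⟩
    refine (norm_coe_mul_le (a * κ) a⁻¹).trans ?_
    gcongr
    exact (norm_coe_mul_le _ _).trans (by gcongr; exact hK κ hκ)
  obtain ⟨p, ⟨hp, κ, hκ, hκp : a * κ * a⁻¹ = p⟩, hmax⟩ := exists_forall_norm_mul_apply_le hP b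
    (v := v) fun h => hvv (by rw [h, map_zero])
  refine ⟨b * p, mul_mem hb hp, α, hα, ⟨κ⁻¹ * k, ?_, ?_, ?_⟩, fun y hy hey hfy hyy hyδ => ?_⟩
  · refine mul_mem (inv_mem ?_) hk
    rw [show κ = a⁻¹ * p * a by rw [← hκp]; group]
    exact mul_mem (mul_mem (inv_mem haΓ) (isometriesFixing_mono (Set.subset_insert u s) hp)) haΓ
  · exact (norm_coe_mul_le _ _).trans (by gcongr; exact hK _ (inv_mem hκ))
  · rw [← ha, ← hκp]; group
  · have hyu : y ∈ orthogonalTo B (insert u s) := by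
      rintro x (rfl | hx)
      · rw [hu, map_smulₛₗ, smul_apply, map_add, add_apply, hey, hfy, add_zero, smul_zero]
      · exact hy x (Set.mem_insert_of_mem v hx)
    have hvy : B v y = 0 := hy v (Set.mem_insert v s)
    obtain ⟨q, hq, hqy⟩ := hB.exists_isometry_coe_eq_eichler hvv hyy hvy hv hyu
    have hqv : q v = v + y := by
      rw [← eichler_apply_self hvv (hB.ortho_comm.1 hvy), ← hqy]; rfl
    rw [← hqv]
    refine hmax (p * q) (mul_mem ⟨hp, κ, hκ, hκp⟩ ⟨hq, a⁻¹ * q * a, hrK _ ?_, ?_⟩)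
    · exact hconj α hα y hey hfy hyδ q hqy
    · exact (show a * (a⁻¹ * q * a) * a⁻¹ = q by group)

end NearlyMaximal

section CartanDecomposition

/-- The relative Cartan decomposition of the stabilizer of `w 0, …, w (j - 1)` with respect to the
stabilizer of one more vector `w j`, with the compact factors replaced by bounded ones. -/
def HasCartanDecomposition (B : V →SL[σ] V →L[E] E) (l : ℕ) (w : ℕ → V) (j : ℕ) : Prop :=
  ∃ M : ℝ, ∀ g ∈ initialStabilizer B w j,
    ∃ k' ∈ initialStabilizer B w (j + 1), ‖(k' : V →L[E] V)‖ ≤ M ∧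
    ∃ t' α', IsChamberElement B l w (j + 1) α' t' ∧
    ∃ t α, IsChamberElement B l w j α t ∧
    ∃ k ∈ initialStabilizer B w j, ‖(k : V →L[E] V)‖ ≤ M ∧ g = k' * t' * t * k

variable {l j : ℕ} {w : ℕ → V} {α β : ℕ → Eˣ} {t t' k k' : V ≃L[E] V}

theorem apply_add_smul_inv_apply (hj : j + 3 ≤ l)
    (ht : IsChamberElement B l w (j + 2) β t) (hk : k ∈ initialStabilizer B w (j + 2)) (x : E) :
    (t' * t * k) (w (j + 1) + x • k⁻¹ (w (j + 2) - w (j + 3))) =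
      t' (w (j + 1) + (x * (σ (β 0))⁻¹) • (w (j + 2) - w (j + 3))) := by
  change t' (t (k _)) = _
  rw [map_add k, map_smul k, apply_inv_self, apply_eq_of_mem_initialStabilizer hk (by omega),
    map_add t, map_smul t, apply_eq_of_mem_initialStabilizer ht.mem (by omega), mul_smul]
  congr 3
  exact ht.apply_sub 0 hj

theorem IsAlternatingFrame.exists_norm_le_of_norm_apply_le [RingHomIsometric σ] [NeZero (2 : E)]
    (hw : IsAlternatingFrame B l w) (hj : j + 2 ≤ l) {r : ℝ} (hr : 0 ≤ r) :
    ∃ C, ∀ t α, IsChamberElement B l w j α t → ∀ c : E,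
      ‖t (w j + c • (w (j + 1) - w (j + 2)))‖ ≤ r * ‖t (w j)‖ → ‖c‖ ≤ C := by
  have hadd : B (w j + w (j + 1)) (w (j + 1) - w (j + 2)) = B (w (j + 1)) (w (j + 1)) := by
    simp [hw.ortho j (by omega) (j + 1) (by omega) (by omega),
      hw.ortho j (by omega) (j + 2) hj (by omega),
      hw.ortho (j + 1) (by omega) (j + 2) hj (by omega)]
  refine ⟨(‖B‖ * ‖w j + w (j + 1)‖ * (r * (‖(2 : E)⁻¹‖ * (‖w j + w (j + 1)‖ +
    ‖w j - w (j + 1)‖))) + ‖B (w j + w (j + 1)) (w j)‖) / ‖B (w (j + 1)) (w (j + 1))‖,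
    fun t α ht c hle => (le_div_iff₀ (norm_pos_iff.2 (hw.self_ne_zero (by omega)))).2 ?_⟩
  rw [← hadd]
  exact norm_mul_norm_apply_le ht.mem hr (ht.apply_add 0 (by omega)) (ht.apply_sub 0 (by omega))
    (α 0).ne_zero (ht.norm_le_one 0 (by omega)) (eq_inv_two_smul_add_add_sub _ _) hle

theorem norm_le_of_norm_apply_le {M c : ℝ} (hc : 0 ≤ c) (hk : ‖(k : V →L[E] V)‖ ≤ M)
    (hk' : ‖((k⁻¹ : V ≃L[E] V) : V →L[E] V)‖ ≤ M) {x y : V} (hxy : ‖k x‖ ≤ c * ‖k y‖) :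
    ‖x‖ ≤ M * (c * M) * ‖y‖ :=
  have hM : 0 ≤ M := (norm_nonneg _).trans hk
  calc ‖x‖ = ‖k⁻¹ (k x)‖ := by rw [inv_apply_self]
    _ ≤ M * ‖k x‖ := le_of_opNorm_le _ hk' _
    _ ≤ M * (c * (M * ‖y‖)) := by
        gcongr
        exact hxy.trans (by gcongr; exact le_of_opNorm_le _ hk y)
    _ = M * (c * M) * ‖y‖ := by ring

-- The competitor `y` is a multiple of `k⁻¹ (w (j + 2) - w (j + 3))` of size about `‖α‖`. As `t`
-- multiplies `w (j + 2) - w (j + 3)` by `(σ (β 0))⁻¹`, the assumption on `k' * t' * t * k` becomes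
-- the one of `norm_mul_norm_apply_le` for `t'`, with `‖c‖` about `‖α‖ / ‖β 0‖`.
theorem IsAlternatingFrame.exists_norm_le_mul_norm [RingHomIsometric σ] [NeZero (2 : E)]
    (hw : IsAlternatingFrame B l w) (hj : j + 3 ≤ l) (M : ℝ) {δ : ℝ} (hδ : 0 < δ) :
    ∃ C, ∀ k' : V ≃L[E] V, ‖(k' : V →L[E] V)‖ ≤ M → ‖((k'⁻¹ : V ≃L[E] V) : V →L[E] V)‖ ≤ M →
      ∀ t' α', IsChamberElement B l w (j + 1) α' t' → ∀ t β, IsChamberElement B l w (j + 2) β t →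
      ∀ k ∈ initialStabilizer B w (j + 2), ‖((k⁻¹ : V ≃L[E] V) : V →L[E] V)‖ ≤ M → ∀ α : E,
      (∀ y ∈ orthogonalTo B (w '' Set.Iio (j + 2)), B y y = 0 → ‖y‖ ≤ δ * ‖α‖ →
        ‖(k' * t' * t * k) (w (j + 1) + y)‖ ≤ 2 * ‖(k' * t' * t * k) (w (j + 1))‖) →
      ‖α‖ ≤ C * ‖(β 0 : E)‖ := by
  set f := w (j + 2) - w (j + 3)
  obtain ⟨C, hC⟩ := hw.exists_norm_le_of_norm_apply_le (j := j + 1) (by omega)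
    (r := M * (2 * M)) (by nlinarith [mul_self_nonneg M])
  obtain ⟨θ, hθ0, hθ⟩ := NormedField.exists_norm_lt E (r := δ / (|M| * ‖f‖ + 1)) (by positivity)
  refine ⟨C / ‖θ‖, fun k' hk' hk'inv t' α' ht' t β ht k hk hkM α hmax => ?_⟩
  have hβ : 0 < ‖(β 0 : E)‖ := norm_pos_iff.2 (β 0).ne_zero
  have hy : k⁻¹ f ∈ orthogonalTo B (w '' Set.Iio (j + 2)) := apply_mem_orthogonalTo (inv_mem hk)
    (sub_mem (hw.mem_orthogonalTo le_rfl (by omega)) (hw.mem_orthogonalTo (by omega) hj))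
  have hyy : B ((θ * α) • k⁻¹ f) ((θ * α) • k⁻¹ f) = 0 := by
    rw [map_smul, map_smulₛₗ, smul_apply, (inv_mem hk).1,
      (hw.isHyperbolicPair (by omega : j + 2 < l)).right, smul_zero, smul_zero]
  have hyδ : ‖(θ * α) • k⁻¹ f‖ ≤ δ * ‖α‖ :=
    calc ‖(θ * α) • k⁻¹ f‖ ≤ ‖θ‖ * ‖α‖ * (|M| * ‖f‖) := by
          rw [norm_smul, norm_mul]
          gcongr
          exact le_of_opNorm_le _ (hkM.trans (le_abs_self M)) f
      _ ≤ δ / (|M| * ‖f‖ + 1) * ‖α‖ * (|M| * ‖f‖ + 1) := by gcongr; linarith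
      _ = δ * ‖α‖ := by field_simp
  have hgrow : ‖t' (w (j + 1) + (θ * α * (σ (β 0))⁻¹) • f)‖ ≤
      M * (2 * M) * ‖t' (w (j + 1))‖ := by
    have h := hmax _ (Submodule.smul_mem _ _ hy) hyy hyδ
    rw [mul_assoc k', mul_assoc k'] at h
    have h' : ‖(t' * t * k) (w (j + 1) + (θ * α) • k⁻¹ f)‖ ≤
        M * (2 * M) * ‖(t' * t * k) (w (j + 1))‖ :=
      norm_le_of_norm_apply_le zero_le_two hk' hk'inv h
    have hfix : (t' * t * k) (w (j + 1)) = t' (w (j + 1)) := by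
      simpa using apply_add_smul_inv_apply (t' := t') hj ht hk 0
    rwa [apply_add_smul_inv_apply hj ht hk, hfix] at h'
  have hc := hC t' α' ht' _ hgrow
  rw [norm_mul, norm_mul, norm_inv, RingHomIsometric.norm_map, ← div_eq_mul_inv,
    div_le_iff₀ hβ] at hc
  rwa [div_mul_eq_mul_div, le_div_iff₀ hθ0, mul_comm]

theorem exists_unit_balanced {α β : Eˣ} {C : ℝ} (hC : 1 ≤ C) (hαβ : ‖(α : E)‖ ≤ C * ‖(β : E)‖) :
    ∃ α' γ : Eˣ, α = α' * γ ∧ ‖(α' : E)‖ ≤ ‖(α : E)‖ ∧ ‖(α' : E)‖ ≤ ‖(β : E)‖ ∧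
      ‖(γ : E)‖ ≤ C ∧ ‖(γ : E)‖⁻¹ ≤ C := by
  rcases le_total ‖(α : E)‖ ‖(β : E)‖ with h | h
  · exact ⟨α, 1, by simp, le_rfl, h, by simpa using hC, by simpa using hC⟩
  · have hβ : 0 < ‖(β : E)‖ := norm_pos_iff.2 β.ne_zero
    have hα : 0 < ‖(α : E)‖ := norm_pos_iff.2 α.ne_zero
    refine ⟨β, β⁻¹ * α, by simp, h, le_rfl, ?_, ?_⟩ <;>
      simp only [Units.val_mul, Units.val_inv_eq_inv_val, norm_mul, norm_inv, mul_inv, inv_inv]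
    · rwa [inv_mul_le_iff₀ hβ, mul_comm]
    · exact ((mul_inv_le_iff₀ hα).2 (by rwa [one_mul])).trans hC

theorem HasCartanDecomposition.exists_inv [RingHomIsometric σ] [RingHomInvPair σ σ]
    [CompleteSpace E] [FiniteDimensional E V] (hB : IsHermitianForm B)
    (h : HasCartanDecomposition B l (alternate w) j) :
    ∃ M, ∀ g ∈ initialStabilizer B w j,
      ∃ k' ∈ initialStabilizer B w j, ‖(k' : V →L[E] V)‖ ≤ M ∧
        ‖((k'⁻¹ : V ≃L[E] V) : V →L[E] V)‖ ≤ M ∧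
      ∃ t' α', IsChamberElement B l w j α' t' ∧
      ∃ t α, IsChamberElement B l w (j + 1) α t ∧
      ∃ k ∈ initialStabilizer B w (j + 1), ‖(k : V →L[E] V)‖ ≤ M ∧
        ‖((k⁻¹ : V ≃L[E] V) : V →L[E] V)‖ ≤ M ∧ g = k' * t' * t * k := by
  obtain ⟨M, hM⟩ := h
  obtain ⟨C, hC, hinv⟩ := hB.exists_norm_inv_le (s := ∅)
  simp only [initialStabilizer_alternate] at hM
  refine ⟨max M (C * M), fun g hg => ?_⟩
  obtain ⟨k', hk', hk'M, t', α', ht', t, α, ht, k, hk, hkM, hgk⟩ := hM _ (inv_mem hg)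
  have hinv_le : ∀ κ : V ≃L[E] V, ∀ i, κ ∈ initialStabilizer B w i → ‖(κ : V →L[E] V)‖ ≤ M →
      ‖((κ⁻¹ : V ≃L[E] V) : V →L[E] V)‖ ≤ max M (C * M) := fun κ i hκ hκM =>
    (hinv κ (isometriesFixing_mono (Set.empty_subset _) hκ)).trans
      ((mul_le_mul_of_nonneg_left hκM hC.le).trans (le_max_right _ _))
  refine ⟨k⁻¹, inv_mem hk, hinv_le k _ hk hkM, ?_, t⁻¹, _, ht.inv_of_alternate, t'⁻¹, _,
    ht'.inv_of_alternate, k'⁻¹, inv_mem hk', hinv_le k' _ hk' hk'M, ?_, ?_⟩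
  · rw [inv_inv]; exact hkM.trans (le_max_left _ _)
  · rw [inv_inv]; exact hk'M.trans (le_max_left _ _)
  · rw [← inv_inv g, hgk]; group

theorem IsAlternatingFrame.exists_nearly_maximal_decomposition [RingHomIsometric σ]
    [RingHomInvPair σ σ] [CompleteSpace E] [IsUltrametricDist E] [FiniteDimensional E V]
    [NeZero (2 : E)] (hB : IsHermitianForm B) (hw : IsAlternatingFrame B l w) (hj : j < l) :
    ∃ M, ∃ δ > 0, ∀ g ∈ initialStabilizer B w j, ∃ b ∈ initialStabilizer B w (j + 1), ∃ α : Eˣ,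
      ‖(α : E)‖ ≤ 1 ∧ (∃ k ∈ initialStabilizer B w j, ‖(k : V →L[E] V)‖ ≤ M ∧
        g = b * hB.scaling (hw.isHyperbolicPair hj) α * k) ∧
      ∀ y ∈ orthogonalTo B (w '' Set.Iio (j + 2)), B y y = 0 → ‖y‖ ≤ δ * ‖(α : E)‖ →
        ‖b (w (j + 1) + y)‖ ≤ 2 * ‖b (w (j + 1))‖ := by
  have hjs := hw.mem_orthogonalTo (le_refl j) hj.le
  have hjs' := hw.mem_orthogonalTo (Nat.le_succ j) hj
  obtain ⟨M, δ, hδ, hM⟩ := hB.exists_nearly_maximal_rankOne_decomposition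
    (hw.span_sup_orthogonalTo (by omega)) (hw.isHyperbolicPair hj) (add_mem hjs hjs')
    (sub_mem hjs hjs') (eq_inv_two_smul_add_add_sub _ _) (hw.self_ne_zero hj.le)
    (image_Iio_succ w j ▸ hw.mem_orthogonalTo le_rfl hj) (hw.self_ne_zero hj)
  refine ⟨M, δ, hδ, fun g hg => ?_⟩
  obtain ⟨b, hb, α, hα, hk, hmax⟩ := hM g hg
  refine ⟨b, by rwa [initialStabilizer, image_Iio_succ], α, hα, hk, fun y hy => ?_⟩
  simp only [image_Iio_succ w (j + 1), image_Iio_succ w j] at hy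
  have hyj : B (w j) y = 0 := hy _ (by simp)
  have hyj' : B (w (j + 1)) y = 0 := hy _ (by simp)
  exact hmax y (orthogonalTo_anti (Set.insert_subset_insert (Set.subset_insert _ _)) hy)
    (by simp [hyj, hyj']) (by simp [hyj, hyj'])

theorem HasCartanDecomposition.of_alternate_succ [RingHomIsometric σ] [RingHomInvPair σ σ]
    [CompleteSpace E] [IsUltrametricDist E] [FiniteDimensional E V] [NeZero (2 : E)]
    (hB : IsHermitianForm B) (hw : IsAlternatingFrame B l w) (hj : j < l)
    (h : HasCartanDecomposition B l (alternate w) (j + 1)) : HasCartanDecomposition B l w j := by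
  have hef := hw.isHyperbolicPair hj
  obtain ⟨M₁, hM₁⟩ := h.exists_inv hB
  obtain ⟨M₂, δ, hδ, hM₂⟩ := hw.exists_nearly_maximal_decomposition hB hj
  choose! C hC using fun hj3 : j + 3 ≤ l => hw.exists_norm_le_mul_norm hj3 M₁ hδ
  obtain ⟨S, _, hscale⟩ := hB.exists_norm_scaling_le hef
  refine ⟨max M₁ (M₁ * (S * max 1 C) * M₂), fun g hg => ?_⟩
  obtain ⟨b, hb, α, hα, ⟨k, hk, hkM, rfl⟩, hmax⟩ := hM₂ g hg
  obtain ⟨k₁, hk₁, hk₁M, hk₁M', t₁, α₁, ht₁, t₂, β, ht₂, k₂, hk₂, hk₂M, hk₂M', rfl⟩ := hM₁ b hb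
  obtain ⟨α', γ, rfl, hα'α, hα'β, hγ, hγ'⟩ : ∃ α' γ : Eˣ, α = α' * γ ∧ ‖(α' : E)‖ ≤ ‖(α : E)‖ ∧
      (j + 3 ≤ l → ‖(α' : E)‖ ≤ ‖(β 0 : E)‖) ∧ ‖(γ : E)‖ ≤ max 1 C ∧ ‖(γ : E)‖⁻¹ ≤ max 1 C := by
    by_cases hj3 : j + 3 ≤ l
    · have hle := hC hj3 k₁ hk₁M hk₁M' t₁ α₁ ht₁ t₂ β ht₂ k₂ hk₂ hk₂M' α hmax
      obtain ⟨α', γ, hα', hle, hle', hγ⟩ := exists_unit_balanced (le_max_left 1 C)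
        (hle.trans (mul_le_mul_of_nonneg_right (le_max_right 1 C) (norm_nonneg _)))
      exact ⟨α', γ, hα', hle, fun _ => hle', hγ⟩
    · exact ⟨α, 1, by simp, le_rfl, fun h => absurd h hj3, by simp, by simp⟩
  have hcomm : Commute k₂ (hB.scaling hef α') := hB.commute_scaling hef α' ⟨hk₂.1, by
    simp [apply_eq_of_mem_initialStabilizer hk₂ (by omega : j < j + 2),
      apply_eq_of_mem_initialStabilizer hk₂ (by omega : j + 1 < j + 2)]⟩
  refine ⟨k₁, hk₁, hk₁M.trans (le_max_left _ _), t₁, α₁, ht₁, t₂ * hB.scaling hef α', _,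
    ht₂.mul_scaling hB hw hj (hα'α.trans hα) hα'β, k₂ * hB.scaling hef γ * k, ?_, ?_, ?_⟩
  · exact mul_mem (mul_mem (initialStabilizer_anti w (by omega) hk₂)
      (hw.scaling_mem_initialStabilizer hB hj γ)) hk
  · have hk₂γ := (norm_coe_mul_le k₂ (hB.scaling hef γ)).trans
      (mul_le_mul hk₂M (hscale γ _ (le_max_left 1 C) hγ hγ') (norm_nonneg _)
        ((norm_nonneg _).trans hk₂M))
    exact ((norm_coe_mul_le _ k).trans (mul_le_mul hk₂γ hkM (norm_nonneg _)
      ((norm_nonneg _).trans hk₂γ))).trans (le_max_right _ _)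
  · calc k₁ * t₁ * t₂ * k₂ * hB.scaling hef (α' * γ) * k
        = k₁ * t₁ * t₂ * (k₂ * hB.scaling hef α') * hB.scaling hef γ * k := by
          rw [map_mul]; group
      _ = _ := by rw [hcomm.eq]; group

theorem IsAlternatingFrame.hasCartanDecomposition [RingHomIsometric σ] [RingHomInvPair σ σ]
    [CompleteSpace E] [IsUltrametricDist E] [FiniteDimensional E V] [NeZero (2 : E)]
    (hB : IsHermitianForm B) (hw : IsAlternatingFrame B l w)
    (hbdd : ∃ M, ∀ g ∈ initialStabilizer B w l, ‖(g : V →L[E] V)‖ ≤ M) (hj : j ≤ l) :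
    HasCartanDecomposition B l w j := by
  induction hj using Nat.decreasingInduction generalizing w with
  | self =>
    obtain ⟨M, hM⟩ := hbdd
    refine ⟨M, fun g hg => ⟨1, one_mem _, hM 1 (one_mem _), 1, 1, ?_, 1, 1, ?_, g, hg, hM g hg,
      by simp⟩⟩ <;>
    exact ⟨one_mem _, by omega, by omega, fun _ _ => rfl, by omega, by omega⟩
  | of_succ j hj ih =>
    exact .of_alternate_succ hB hw hj (ih hw.alternate (by rwa [initialStabilizer_alternate]))

end CartanDecomposition

section AnisotropicBound

theorem exists_norm_sq_le_of_anisotropic [RingHomIsometric σ] [ProperSpace E]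
    [FiniteDimensional E V] {N : Submodule E V} (hN : ∀ v ∈ N, v ≠ 0 → B v v ≠ 0) :
    ∃ c > 0, ∀ v ∈ N, c * ‖v‖ ^ 2 ≤ ‖B v v‖ := by
  have : ProperSpace V := FiniteDimensional.proper E V
  obtain ⟨r, hr⟩ := NormedField.exists_one_lt_norm E
  let A : Set V := closedBall 0 1 ∩ ({v | 1 / ‖r‖ ≤ ‖v‖} ∩ N)
  have hA : IsCompact A := (isCompact_closedBall 0 1).inter_right
    ((isClosed_le continuous_const continuous_norm).inter N.closed_of_finiteDimensional)
  obtain ⟨c, hc, hcA⟩ : ∃ c > 0, ∀ v ∈ A, c ≤ ‖B v v‖ :=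
    hA.exists_forall_le' (B.continuous.clm_apply continuous_id).norm.continuousOn
      fun v hv => norm_pos_iff.2 <| hN v hv.2.2 <| norm_pos_iff.1 <|
        (by positivity : 0 < 1 / ‖r‖).trans_le hv.2.1
  refine ⟨c, hc, fun v hv => ?_⟩
  by_cases hv0 : v = 0
  · simp [hv0]
  obtain ⟨d, -, hd1, hdr, -⟩ := rescale_to_shell hr one_pos hv0
  have hcd : c ≤ ‖d‖ * (‖d‖ * ‖B v v‖) := by
    simpa [norm_smul] using hcA (d • v) ⟨by simpa using hd1.le, hdr, N.smul_mem d hv⟩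
  rw [norm_smul] at hd1
  calc c * ‖v‖ ^ 2 ≤ ‖d‖ * (‖d‖ * ‖B v v‖) * ‖v‖ ^ 2 := by gcongr
    _ = (‖d‖ * ‖v‖) ^ 2 * ‖B v v‖ := by ring
    _ ≤ 1 ^ 2 * ‖B v v‖ := by gcongr
    _ = ‖B v v‖ := by rw [one_pow, one_mul]

theorem exists_norm_le_of_anisotropic [RingHomIsometric σ] [ProperSpace E]
    [FiniteDimensional E V] (hs : Submodule.span E s ⊔ orthogonalTo B s = ⊤)
    (hB : ∀ v ∈ orthogonalTo B s, v ≠ 0 → B v v ≠ 0) :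
    ∃ M, ∀ g ∈ isometriesFixing B s, ‖(g : V →L[E] V)‖ ≤ M := by
  have : CompleteSpace V := FiniteDimensional.complete E V
  obtain ⟨c, hc, hcN⟩ := exists_norm_sq_le_of_anisotropic hB
  obtain ⟨M, hM⟩ := banach_steinhaus (g := fun g : isometriesFixing B s => (g : V →L[E] V))
    fun v => by
      obtain ⟨x, hx, y, hy, rfl⟩ := Submodule.mem_sup.1 (hs ▸ Submodule.mem_top : v ∈ _)
      refine ⟨‖x‖ + √(‖B y y‖ / c), fun ⟨g, hg⟩ => ?_⟩
      have hgx : g x = x := LinearMap.eqOn_span' (f := (g : V →ₗ[E] V)) (g := .id) hg.2 hx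
      have hgy : ‖g y‖ ≤ √(‖B y y‖ / c) := Real.le_sqrt_of_sq_le <|
        (le_div_iff₀' hc).2 <| (hcN _ (apply_mem_orthogonalTo hg hy)).trans_eq (by rw [hg.1])
      exact (congrArg norm (map_add g x y)).trans_le (norm_add_le_of_le (congrArg norm hgx).le hgy)
  exact ⟨M, fun g hg => hM ⟨g, hg⟩⟩

theorem isCompact_setOf_isometry [ProperSpace E] [FiniteDimensional E V] (M : ℝ) :
    IsCompact {g : V →L[E] V | ((∀ x y, B (g x) (g y) = B x y) ∧ ∀ x ∈ s, g x = x) ∧ ‖g‖ ≤ M} := by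
  have : ProperSpace (V →L[E] V) := FiniteDimensional.proper E _
  refine isCompact_of_isClosed_isBounded ?_
    (isBounded_closedBall.subset fun g hg => mem_closedBall_zero_iff.2 hg.2)
  simp only [Set.ofPred_and, Set.ofPred_forall]
  refine ((isClosed_iInter fun x => isClosed_iInter fun y => isClosed_eq ?_ continuous_const).inter
    (isClosed_biInter fun x _ => isClosed_eq ?_ continuous_const)).inter
    (isClosed_le continuous_norm continuous_const)
  · exact (B.continuous.comp (apply E V x).continuous).clm_apply (apply E V y).continuous
  · exact (apply E V x).continuous

end AnisotropicBound

section PadSets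

theorem eq_zero_of_add_sub_eq_zero [NeZero (2 : E)] {x y v : V} (hadd : B (x + y) v = 0)
    (hsub : B (x - y) v = 0) : B x v = 0 ∧ B y v = 0 := by
  rw [map_add, add_apply] at hadd
  rw [map_sub, sub_apply] at hsub
  have hx : 2 * B x v = 0 := by linear_combination hadd + hsub
  have hy : 2 * B y v = 0 := by linear_combination hadd - hsub
  exact ⟨(mul_eq_zero.1 hx).resolve_left two_ne_zero, (mul_eq_zero.1 hy).resolve_left two_ne_zero⟩

theorem coe_mem_padG {g : V ≃L[E] V} (hg : g ∈ isometriesFixing B s) :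
    (g : V →L[E] V) ∈ PadG E V fun u v => B v u :=
  ⟨g.bijective, fun u v => hg.1 v u⟩

variable {l : ℕ} {w : ℕ → V} {α : ℕ → Eˣ} {t : V ≃L[E] V} {val : E → ℤ}

theorem IsChamberElement.coe_mem_padA0 [NeZero (2 : E)] (ht : IsChamberElement B l w 0 α t)
    (hval : ∀ a b : Eˣ, ‖(a : E)‖ ≤ ‖(b : E)‖ → val b ≤ val a) (hval1 : val 1 = 0) :
    (t : V →L[E] V) ∈ PadA0 E V (fun u v => B v u) σ val l w := by
  refine ⟨coe_mem_padG ht.mem, fun i => α (i - 1), fun i hi hi' => ⟨(α _).ne_zero, ?_, ?_⟩,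
    fun v hv => ht.apply_of_ortho v fun i hi => ?_, fun i hi hi' => hval _ _ ?_, fun _ => ?_⟩
  · obtain ⟨i, rfl⟩ := Nat.exists_eq_add_of_le' hi
    simpa [Nat.mul_succ] using ht.apply_add i (by omega)
  · obtain ⟨i, rfl⟩ := Nat.exists_eq_add_of_le' hi
    simpa [Nat.mul_succ] using ht.apply_sub i (by omega)
  · obtain ⟨hadd, hsub⟩ := hv (i + 1) (by omega) (by omega)
    simpa [Nat.mul_succ] using eq_zero_of_add_sub_eq_zero hadd hsub
  · obtain ⟨i, rfl⟩ := Nat.exists_eq_add_of_le' hi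
    exact ht.norm_le_succ i (by omega)
  · rw [← hval1, ← Units.val_one]
    exact hval _ _ (by simpa using ht.norm_le_one _ (by omega))

theorem IsChamberElement.coe_mem_padAH [NeZero (2 : E)] (ht : IsChamberElement B l w 1 α t)
    (hval : ∀ a b : Eˣ, ‖(a : E)‖ ≤ ‖(b : E)‖ → val b ≤ val a) (hval1 : val 1 = 0) :
    (t : V →L[E] V) ∈ PadAH E V (fun u v => B v u) σ val l w := by
  have hindex : ∀ i, 1 + 2 * i = 2 * (i + 1) - 1 ∧ 1 + 2 * i + 1 = 2 * (i + 1) := by omega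
  have hadd := ht.apply_add
  have hsub := ht.apply_sub
  have hfix := ht.apply_of_ortho
  simp only [hindex] at hadd hsub hfix
  refine ⟨⟨coe_mem_padG ht.mem, apply_eq_of_mem_initialStabilizer ht.mem one_pos⟩,
    fun i => α (i - 1), fun i hi hi' => ⟨(α _).ne_zero, ?_, ?_⟩,
    fun v hv => hfix v fun i hi => ?_, fun i hi hi' => hval _ _ ?_, fun _ => ?_⟩
  · obtain ⟨i, rfl⟩ := Nat.exists_eq_add_of_le' hi
    exact hadd i (by omega)
  · obtain ⟨i, rfl⟩ := Nat.exists_eq_add_of_le' hi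
    exact hsub i (by omega)
  · obtain ⟨hadd, hsub⟩ := hv.2 (i + 1) (by omega) (by omega)
    exact eq_zero_of_add_sub_eq_zero hadd hsub
  · obtain ⟨i, rfl⟩ := Nat.exists_eq_add_of_le' hi
    exact ht.norm_le_succ i (by omega)
  · rw [← hval1, ← Units.val_one]
    exact hval _ _ (by simpa using ht.norm_le_one _ (by omega))

theorem self_ne_zero_of_padVan_of_padWan
    (hV : ∀ v ∈ PadVan E V (fun u v => B v u) l w, v ≠ 0 → B v v ≠ 0)
    (hW : ∀ v ∈ PadWan E V (fun u v => B v u) l w, v ≠ 0 → B v v ≠ 0)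
    {v : V} (hv : v ∈ orthogonalTo B (w '' Set.Iio l)) (hv0 : v ≠ 0) : B v v ≠ 0 := by
  have hwv : ∀ i < l, B (w i) v = 0 := fun i hi => hv _ (Set.mem_image_of_mem w hi)
  rcases Nat.even_or_odd' l with ⟨m, rfl | rfl⟩
  · exact hV v (fun i _ _ => by simp [hwv _ (by omega : 2 * i - 2 < 2 * m),
      hwv _ (by omega : 2 * i - 1 < 2 * m)]) hv0
  · exact hW v ⟨hwv 0 (by omega), fun i _ _ => by simp [hwv _ (by omega : 2 * i - 1 < 2 * m + 1),
      hwv _ (by omega : 2 * i < 2 * m + 1)]⟩ hv0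

theorem exists_isHermitianForm_eq [CompleteSpace E] [FiniteDimensional E V] [RingHomIsometric σ]
    {h : V → V → E} (hadd : ∀ u u' v, h (u + u') v = h u v + h u' v)
    (hsmul : ∀ (a : E) (u v : V), h (a • u) v = a * h u v) (hconj : ∀ u v, h v u = σ (h u v))
    (hnd : ∀ u, (∀ v, h u v = 0) → u = 0) :
    ∃ B : V →SL[σ] V →L[E] E, IsHermitianForm B ∧ h = fun u v => B v u := by
  let φ (v : V) : V →L[E] E := LinearMap.toContinuousLinearMap
    { toFun := fun u => h u v, map_add' := fun u u' => hadd u u' v,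
      map_smul' := fun a u => hsmul a u v }
  have hφ : Continuous φ := continuous_clm_apply.2 fun u => by
    refine ((AddMonoidHomClass.isometry_of_norm σ fun _ =>
      RingHomIsometric.norm_map).continuous.comp (φ u).continuous).congr fun v => ?_
    exact (hconj v u).symm
  refine ⟨⟨⟨⟨φ, fun v v' => ?_⟩, fun a v => ?_⟩, hφ⟩, ⟨fun u v => (hconj v u).symm, fun v hv => ?_⟩,
    rfl⟩
  · ext u
    change h u (v + v') = h u v + h u v'
    rw [hconj (v + v'), hadd, map_add, ← hconj, ← hconj]
  · ext u
    change h u (a • v) = σ a * h u v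
    rw [hconj (a • v), hsmul, map_mul, ← hconj]
  · exact hnd v fun u => by rw [hconj u v, show h u v = 0 from hv u, map_zero]

theorem IsAlternatingFrame.exists_compact_decomposition [RingHomIsometric σ] [RingHomInvPair σ σ]
    [ProperSpace E] [IsUltrametricDist E] [FiniteDimensional E V] [NeZero (2 : E)]
    (hB : IsHermitianForm B) (hw : IsAlternatingFrame B l w)
    (haniso : ∀ v ∈ orthogonalTo B (w '' Set.Iio l), v ≠ 0 → B v v ≠ 0)
    (hval : ∀ a b : Eˣ, ‖(a : E)‖ ≤ ‖(b : E)‖ → val b ≤ val a) (hval1 : val 1 = 0) :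
    ∃ CH C₀ : Set (V →L[E] V),
      CH ⊆ PadH E V (fun u v => B v u) (w 0) ∧ C₀ ⊆ PadG E V (fun u v => B v u) ∧
      IsCompact CH ∧ IsCompact C₀ ∧
      ∀ g ∈ PadG E V fun u v => B v u, ∃ kH ∈ CH, ∃ aH ∈ PadAH E V (fun u v => B v u) σ val l w,
        ∃ a₀ ∈ PadA0 E V (fun u v => B v u) σ val l w, ∃ k₀ ∈ C₀,
          g = kH.comp (aH.comp (a₀.comp k₀)) := by
  obtain ⟨M, hM⟩ := hw.hasCartanDecomposition hB
    (exists_norm_le_of_anisotropic (hw.span_sup_orthogonalTo (Nat.le_succ l)) haniso)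
    (Nat.zero_le l)
  refine ⟨_, _, fun g hg => ?_, fun g hg => ?_,
    isCompact_setOf_isometry (B := B) (s := w '' Set.Iio 1) M,
    isCompact_setOf_isometry (B := B) (s := w '' Set.Iio 0) M, fun g hg => ?_⟩
  · obtain ⟨e, he, rfl⟩ := hB.exists_isometry_coe_eq g hg.1.1 hg.1.2
    exact ⟨coe_mem_padG he, apply_eq_of_mem_initialStabilizer he one_pos⟩
  · obtain ⟨e, he, rfl⟩ := hB.exists_isometry_coe_eq g hg.1.1 hg.1.2
    exact coe_mem_padG he
  · obtain ⟨e, he, rfl⟩ := hB.exists_isometry_coe_eq (s := w '' Set.Iio 0) g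
      (fun x y => hg.2 y x) (by simp)
    obtain ⟨k', hk', hk'M, t', α', ht', t, α, ht, k, hk, hkM, rfl⟩ := hM e he
    exact ⟨k', ⟨hk', hk'M⟩, t', ht'.coe_mem_padAH hval hval1, t, ht.coe_mem_padA0 hval hval1,
      k, ⟨hk, hkM⟩, rfl⟩

end PadSets

end RelativeCartan

theorem stmt_11_general (E : Type*) [NontriviallyNormedField E] [NeZero (2 : E)]
    (hna : ∀ x y : E, ‖x + y‖ ≤ max ‖x‖ ‖y‖)
    (hloc : IsCompact (Metric.closedBall (0 : E) 1))
    (πE : E) (hπ0 : πE ≠ 0) (hπ1 : ‖πE‖ < 1)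
    (valE : E → ℤ) (hval : ∀ x : E, x ≠ 0 → ‖x‖ = ‖πE‖ ^ valE x)
    (σ : E →+* E) (hσ2 : ∀ x : E, σ (σ x) = x) (hσiso : ∀ x : E, ‖σ x‖ = ‖x‖)
    (V₀ : Type*) [NormedAddCommGroup V₀] [NormedSpace E V₀] [FiniteDimensional E V₀]
    (h : V₀ → V₀ → E)
    (haddl : ∀ u u' v : V₀, h (u + u') v = h u v + h u' v)
    (hsmull : ∀ (a : E) (u v : V₀), h (a • u) v = a * h u v)
    (hconj : ∀ u v : V₀, h v u = σ (h u v))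
    (hnd : ∀ u : V₀, (∀ v : V₀, h u v = 0) → u = 0)
    (ν₀ : E) (hν0 : ν₀ ≠ 0) (l : ℕ) (w : ℕ → V₀)
    (horth : ∀ i ≤ l, ∀ j ≤ l, i ≠ j → h (w i) (w j) = 0)
    (hvalw : ∀ i ≤ l, h (w i) (w i) = (-1 : E) ^ i * ν₀)
    (hanV : ∀ v ∈ PadVan E V₀ h l w, v ≠ 0 → h v v ≠ 0)
    (hanW : ∀ v ∈ PadWan E V₀ h l w, v ≠ 0 → h v v ≠ 0) :
    ∃ (CH C₀ : Set (V₀ →L[E] V₀)),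
      CH ⊆ PadH E V₀ h (w 0) ∧ C₀ ⊆ PadG E V₀ h ∧ IsCompact CH ∧ IsCompact C₀ ∧
      ∀ g ∈ PadG E V₀ h, ∃ kH ∈ CH, ∃ aH ∈ PadAH E V₀ h (⇑σ) valE l w,
        ∃ a₀ ∈ PadA0 E V₀ h (⇑σ) valE l w, ∃ k₀ ∈ C₀,
          g = kH.comp (aH.comp (a₀.comp k₀)) := by
  have : LocallyCompactSpace E :=
    hloc.locallyCompactSpace_of_mem_nhds_of_addGroup (Metric.closedBall_mem_nhds 0 one_pos)
  have : ProperSpace E := .of_locallyCompactSpace E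
  have : IsUltrametricDist E := .isUltrametricDist_of_forall_norm_add_le_max_norm hna
  have : RingHomIsometric σ := ⟨hσiso _⟩
  have : RingHomInvPair σ σ := ⟨RingHom.ext hσ2, RingHom.ext hσ2⟩
  obtain ⟨B, hB, rfl⟩ := exists_isHermitianForm_eq haddl hsmull hconj hnd
  have hw : IsAlternatingFrame B l w :=
    ⟨fun i hi j hj hij => horth j hj i hi hij.symm, by simpa [hvalw 0 (Nat.zero_le l)] using hν0,
      fun i hi => by simp [hvalw i hi.le, hvalw (i + 1) hi, pow_succ]⟩
  have hval_le (a b : Eˣ) (hab : ‖(a : E)‖ ≤ ‖(b : E)‖) : valE b ≤ valE a := by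
    rwa [hval a a.ne_zero, hval b b.ne_zero,
      zpow_le_zpow_iff_right_of_lt_one₀ (norm_pos_iff.2 hπ0) hπ1] at hab
  have hval_one : valE 1 = 0 := by
    have h1 := hval 1 one_ne_zero
    rwa [norm_one, eq_comm, zpow_eq_one_iff_right₀ (norm_nonneg _) hπ1.ne] at h1
  exact hw.exists_compact_decomposition hB
    (fun _ hv => self_ne_zero_of_padVan_of_padWan hanV hanW hv) hval_le hval_one

/-- relative Cartan decomposition `G₀ = C_H · A_H⁺ · A₀⁺ · C₀` with `C_H ⊆ H`
and `C₀ ⊆ G₀` compact. -/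
theorem stmt_11 (E : Type*) [NontriviallyNormedField E] [CompleteSpace E] [CharZero E]
    (hna : ∀ x y : E, ‖x + y‖ ≤ max ‖x‖ ‖y‖)
    (hloc : IsCompact (Metric.closedBall (0 : E) 1))
    (πE : E) (hπ0 : πE ≠ 0) (hπ1 : ‖πE‖ < 1)
    (valE : E → ℤ) (hval : ∀ x : E, x ≠ 0 → ‖x‖ = ‖πE‖ ^ valE x) (hvalπ : valE πE = 1)
    (σ : E ≃+* E) (hσ2 : ∀ x : E, σ (σ x) = x) (hσnt : ∃ x : E, σ x ≠ x)
    (hσiso : ∀ x : E, ‖σ x‖ = ‖x‖)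
    (V₀ : Type*) [NormedAddCommGroup V₀] [NormedSpace E V₀] [FiniteDimensional E V₀]
    (h : V₀ → V₀ → E)
    (haddl : ∀ u u' v : V₀, h (u + u') v = h u v + h u' v)
    (hsmull : ∀ (a : E) (u v : V₀), h (a • u) v = a * h u v)
    (hconj : ∀ u v : V₀, h v u = σ (h u v))
    (hnd : ∀ u : V₀, (∀ v : V₀, h u v = 0) → u = 0)
    (ν₀ : E) (hν0 : ν₀ ≠ 0) (hνF : σ ν₀ = ν₀)
    (l : ℕ) (w : ℕ → V₀)
    (horth : ∀ i ≤ l, ∀ j ≤ l, i ≠ j → h (w i) (w j) = 0)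
    (hvalw : ∀ i ≤ l, h (w i) (w i) = (-1 : E) ^ i * ν₀)
    (hanV : ∀ v ∈ PadVan E V₀ h l w, v ≠ 0 → h v v ≠ 0)
    (hanW : ∀ v ∈ PadWan E V₀ h l w, v ≠ 0 → h v v ≠ 0) :
    ∃ (CH C₀ : Set (V₀ →L[E] V₀)),
      CH ⊆ PadH E V₀ h (w 0) ∧ C₀ ⊆ PadG E V₀ h ∧ IsCompact CH ∧ IsCompact C₀ ∧
      ∀ g ∈ PadG E V₀ h, ∃ kH ∈ CH, ∃ aH ∈ PadAH E V₀ h (⇑σ) valE l w,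
        ∃ a₀ ∈ PadA0 E V₀ h (⇑σ) valE l w, ∃ k₀ ∈ C₀,
          g = kH.comp (aH.comp (a₀.comp k₀)) := by
  exact stmt_11_general E hna hloc πE hπ0 hπ1 valE hval σ hσ2 hσiso V₀ h haddl hsmull hconj hnd
    ν₀ hν0 l w horth hvalw hanV hanW
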